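/- Let n ≥ 2 and p, q > 1. Let μ be a nonzero finite Borel measure on the unit sphere S^{n-1} whose density f with respect to spherical Lebesgue measure (i.e. (n−1)-dimensional Hausdorff measure restricted to S^{n-1}) is even and satisfies 1/M₀ ≤ f(u) ≤ M₀ for all u ∈ S^{n-1}, for some constant M₀ > 0. Then there exists an origin-symmetric convex body K ∈ K_e^n such that 0 < C̃_{p,γ_n,q}(K, S^{n-1}) < ∞ and, for every outer unit normal selection ν for K and every Borel set η ⊆ S^{n-1}, one has μ(η) · C̃_{p,γ_n,q}(K, S^{n-1}) = μ(S^{n-1}) · C̃_{p,γ_n,q}(K, η); that is, μ/|μ| = C̃_{p,γ_n,q}(K,·)/|C̃_{p,γ_n,q}(K,·)|. -/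

import Mathlib

open MeasureTheory Metric Set Filter
open scoped RealInnerProductSpace ENNReal Pointwise Topology

/-- The `L_p` Gaussian dual curvature measure of `K` (with respect to an outer unit normal
selection `ν`), evaluated at the Borel set `η ⊆ Sⁿ⁻¹`:
`C̃_{p,γ_n,q}(K,η) = ∫_{∂K ∩ ν⁻¹(η)} ⟨x, ν x⟩^{1-p} |x|^{q-n} e^{-|x|²/2} dH^{n-1}(x)`. -/
noncomputable def lpGaussDualCurv (n : ℕ) (p q : ℝ) (K : Set (EuclideanSpace ℝ (Fin n)))
    (ν : EuclideanSpace ℝ (Fin n) → EuclideanSpace ℝ (Fin n))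
    (η : Set (EuclideanSpace ℝ (Fin n))) : ℝ≥0∞ :=
  ∫⁻ x in frontier K ∩ ν ⁻¹' η,
    ENNReal.ofReal (⟪x, ν x⟫ ^ (1 - p) * ‖x‖ ^ (q - (n : ℝ)) * Real.exp (-‖x‖ ^ 2 / 2))
    ∂(μH[(n : ℝ) - 1])

/-!
Among the even positive continuous functions `h` on the sphere, maximise the Gaussian weighted
volume of the Wulff shape `{x | ∀ v, ⟪x, v⟫ ≤ h v}` minus `l ∫ h ^ p ∂m`, for a small multiplier
`l > 0`. The penalty bounds maximising sequences because `m` charges the complement of every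
hyperplane, and replacing `h` by the support function of its Wulff shape makes them equicontinuous.

The gauge of the Wulff shape is `x ↦ max_v ⟪x, v⟫ / h v`, so Danskin's formula differentiates the
volume along logarithmic variations of `h`. The Euler–Lagrange equation then says that a density on
the sphere, pushed forward by the normal map in radial coordinates, is `l p h ^ p dm`.

To read this as an equation for the curvature measure one needs that the cone measure of a convex
body is `⟪x, ν x⟫ dH^{n-1}` on its boundary. Near a differentiability point of the gauge, central
projection onto the tangent hyperplane is almost isometric, so the identity there reduces to the
volume of a cone over a flat base.
-/

namespace LpGaussDual

open Module

section Cones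

variable {E : Type*}

lemma Ioo_smul_eq_of_homogeneous [AddCommGroup E] [Module ℝ E] {ℓ : E → ℝ}
    (hℓ : ∀ t : ℝ, 0 ≤ t → ∀ x, ℓ (t • x) = t * ℓ x) {b : ℝ} (hb : 0 < b) {A : Set E}
    (hA : ∀ x ∈ A, ℓ x = b) :
    Ioo (0 : ℝ) 1 • A = {x | 0 < ℓ x ∧ ℓ x < b ∧ (b / ℓ x) • x ∈ A} := by
  ext x
  simp only [Set.mem_smul, mem_Ioo, mem_ofPred_eq]
  constructor
  · rintro ⟨t, ⟨ht0, ht1⟩, y, hy, rfl⟩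
    rw [hℓ t ht0.le, hA y hy, smul_smul, div_mul_cancel_right₀ hb.ne', inv_mul_cancel₀ ht0.ne',
      one_smul]
    exact ⟨by positivity, mul_lt_of_lt_one_left hb ht1, hy⟩
  · rintro ⟨h0, h1, h2⟩
    refine ⟨ℓ x / b, ⟨by positivity, (div_lt_one hb).2 h1⟩, _, h2, ?_⟩
    rw [smul_smul, div_mul_div_cancel₀ hb.ne', div_self h0.ne', one_smul]

lemma measurableSet_Ioo_smul_of_homogeneous [AddCommGroup E] [Module ℝ E] [MeasurableSpace E]
    [MeasurableSMul₂ ℝ E] {ℓ : E → ℝ} (hℓ : ∀ t : ℝ, 0 ≤ t → ∀ x, ℓ (t • x) = t * ℓ x)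
    (hℓm : Measurable ℓ) {b : ℝ} (hb : 0 < b) {A : Set E} (hA : ∀ x ∈ A, ℓ x = b)
    (hAm : MeasurableSet A) : MeasurableSet (Ioo (0 : ℝ) 1 • A) := by
  rw [Ioo_smul_eq_of_homogeneous hℓ hb hA]
  have hproj : Measurable fun x => (b / ℓ x) • x := by fun_prop
  exact (measurableSet_lt measurable_const hℓm).inter
    ((measurableSet_lt hℓm measurable_const).inter (hproj hAm))

lemma Ioo_smul_inter_level_eq [AddCommGroup E] [Module ℝ E] {ℓ : E → ℝ}
    (hℓ : ∀ t : ℝ, 0 ≤ t → ∀ x, ℓ (t • x) = t * ℓ x) {b : ℝ} (hb : 0 < b) {A : Set E}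
    (hA : ∀ x ∈ A, ℓ x = b) (s : ℝ) :
    Ioo (0 : ℝ) 1 • A ∩ {x | ℓ x = s} = if s ∈ Ioo 0 b then (s / b) • A else ∅ := by
  rw [Ioo_smul_eq_of_homogeneous hℓ hb hA]
  split_ifs with hs
  · ext y
    have hsb : 0 < s / b := div_pos hs.1 hb
    rw [mem_inter_iff, mem_smul_set_iff_inv_smul_mem₀ hsb.ne', inv_div]
    simp only [mem_ofPred_eq]
    refine ⟨fun ⟨⟨_, _, h⟩, hy⟩ => hy ▸ h, fun h => ?_⟩
    have hy : ℓ y = s := by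
      have := hA _ h
      rw [hℓ _ (div_pos hb hs.1).le] at this
      have hs0 := hs.1.ne'
      field_simp at this
      linarith
    rw [hy]
    exact ⟨⟨hs.1, hs.2, h⟩, rfl⟩
  · refine eq_empty_of_forall_notMem ?_
    rintro y ⟨⟨h0, h1, -⟩, rfl⟩
    exact hs ⟨h0, h1⟩

lemma lintegral_Ioo_pow (d : ℕ) {b : ℝ} (hb : 0 < b) :
    ∫⁻ s in Ioo 0 b, ENNReal.ofReal (s ^ d) = ENNReal.ofReal (b ^ (d + 1) / (d + 1)) := by
  rw [Measure.restrict_congr_set Ioo_ae_eq_Ioc,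
    ← ofReal_integral_eq_lintegral_ofReal (intervalIntegral.intervalIntegrable_pow _).1,
    ← intervalIntegral.integral_of_le hb.le]
  · simp
  · filter_upwards [ae_restrict_mem measurableSet_Ioc] with y hy
    exact pow_nonneg hy.1.le _

variable [NormedAddCommGroup E] [InnerProductSpace ℝ E]

lemma coe_mk'_orthogonal_span_singleton {v : E} (hv : ‖v‖ = 1) (s : ℝ) :
    (AffineSubspace.mk' (s • v +ᵥ (0 : E)) (ℝ ∙ v)ᗮ : Set E) = {y | ⟪y, v⟫ = s} := by
  ext y
  simp only [SetLike.mem_coe, AffineSubspace.mem_mk',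
    Submodule.mem_orthogonal_singleton_iff_inner_right, vadd_eq_add, add_zero, vsub_eq_sub,
    inner_sub_right, inner_smul_right, real_inner_self_eq_norm_sq, hv, real_inner_comm,
    mem_ofPred_eq, one_pow, mul_one, sub_eq_zero]

variable [FiniteDimensional ℝ E] [MeasurableSpace E] [BorelSpace E] {d : ℕ}

lemma volume_Ioo_smul_of_inner_eq (hd : finrank ℝ E = d + 1) {v : E} (hv : ‖v‖ = 1) {b : ℝ}
    (hb : 0 < b) {A : Set E} (hA : ∀ x ∈ A, ⟪x, v⟫ = b) (hAm : MeasurableSet A) :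
    ((d : ℝ≥0∞) + 1) * volume (Ioo (0 : ℝ) 1 • A) = ENNReal.ofReal b * μHE[d] A := by
  have hhom : ∀ t : ℝ, 0 ≤ t → ∀ x : E, ⟪t • x, v⟫ = t * ⟪x, v⟫ :=
    fun t _ x => real_inner_smul_left x v t
  have hslice (s : ℝ) : μHE[d] (Ioo (0 : ℝ) 1 • A ∩
      (AffineSubspace.mk' (s • v +ᵥ (0 : E)) (ℝ ∙ v)ᗮ : Set E)) =
      (Ioo 0 b).indicator
        (fun s => ENNReal.ofReal (s ^ d) * (ENNReal.ofReal (b⁻¹ ^ d) * μHE[d] A)) s := by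
    rw [coe_mk'_orthogonal_span_singleton hv, Ioo_smul_inter_level_eq hhom hb hA, indicator_apply]
    split_ifs with hs
    · have hsb : 0 < s / b := div_pos hs.1 hb
      rw [Measure.euclideanHausdorffMeasure_smul₀ d hsb.ne', ENNReal.smul_def, smul_eq_mul,
        ← mul_assoc, ← ENNReal.ofReal_mul (pow_nonneg hs.1.le d), ← mul_pow, ← div_eq_mul_inv,
        ENNReal.ofReal_pow hsb.le, ENNReal.coe_pow, ← Real.enorm_of_nonneg hsb.le, enorm_eq_nnnorm]
    · exact measure_empty
  rw [← InnerProductSpace.euclideanHausdorffMeasure_eq_volume,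
    EuclideanGeometry.euclideanHausdorffMeasure_eq_lintegral (0 : E)
      (norm_ne_zero_iff.1 (hv ▸ one_ne_zero))
      (measurableSet_Ioo_smul_of_homogeneous hhom (by fun_prop) hb hA hAm), hd,
    ← ofReal_norm, hv, ENNReal.ofReal_one, one_mul, Nat.add_sub_cancel]
  simp_rw [hslice]
  rw [lintegral_indicator measurableSet_Ioo, lintegral_mul_const _ (by fun_prop),
    lintegral_Ioo_pow d hb, ← mul_assoc, ← mul_assoc]
  congr 1
  rw [← Nat.cast_succ, ← ENNReal.ofReal_natCast, ← ENNReal.ofReal_mul (by positivity),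
    ← ENNReal.ofReal_mul (by positivity)]
  congr 1
  rw [inv_pow, pow_succ]
  push_cast
  field_simp

end Cones

section Gauges

variable {E : Type*} [NormedAddCommGroup E] [InnerProductSpace ℝ E] {g : E → ℝ} {x x₀ v w : E}

/-- The gauge functions of star bodies: the body is `{x | g x ≤ 1}` and its boundary is
`{x | g x = 1}`. Gauges of convex bodies are of this kind, but convexity of `g` is replaced by
Lipschitz continuity. -/
structure IsStarGauge (g : E → ℝ) : Prop where
  map_smul : ∀ t : ℝ, 0 ≤ t → ∀ x, g (t • x) = t * g x
  exists_lipschitzWith : ∃ C, LipschitzWith C g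
  exists_mul_norm_le : ∃ c : ℝ, 0 < c ∧ ∀ x, c * ‖x‖ ≤ g x

/-- `v` is an outer unit normal of the star body with gauge `g` at its boundary point `x`.
Homogeneity turns `⟪y, v⟫ ≤ ⟪x, v⟫` for `g y ≤ 1` into an inequality valid for all `y`. -/
def IsOuterNormal (g : E → ℝ) (x v : E) : Prop :=
  ‖v‖ = 1 ∧ ∀ y, ⟪y, v⟫ ≤ g y * ⟪x, v⟫

namespace IsStarGauge

lemma continuous (hg : IsStarGauge g) : Continuous g :=
  hg.exists_lipschitzWith.choose_spec.continuous

lemma pos (hg : IsStarGauge g) (hx : x ≠ 0) : 0 < g x := by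
  obtain ⟨c, hc, h⟩ := hg.exists_mul_norm_le
  exact (mul_pos hc (norm_pos_iff.2 hx)).trans_le (h x)

lemma map_zero (hg : IsStarGauge g) : g 0 = 0 := by
  simpa using hg.map_smul 0 le_rfl 0

lemma nonneg (hg : IsStarGauge g) (x : E) : 0 ≤ g x := by
  obtain ⟨c, hc, h⟩ := hg.exists_mul_norm_le
  exact (by positivity : 0 ≤ c * ‖x‖).trans (h x)

lemma differentiableAt_of_smul (hg : IsStarGauge g) {t : ℝ} (ht : 0 < t)
    (h : DifferentiableAt ℝ g (t • x)) : DifferentiableAt ℝ g x := by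
  have hscale : g = fun y => t⁻¹ * g (t • y) := by
    funext y
    rw [hg.map_smul t ht.le, inv_mul_cancel_left₀ ht.ne']
  rw [hscale]
  exact (h.comp x (by fun_prop : DifferentiableAt ℝ (fun y : E => t • y) x)).const_mul _

lemma measurableSet_level_one [MeasurableSpace E] [BorelSpace E] (hg : IsStarGauge g) :
    MeasurableSet {x | g x = 1} :=
  measurableSet_eq_fun hg.continuous.measurable measurable_const

end IsStarGauge

namespace IsOuterNormal

lemma inner_pos (h : IsOuterNormal g x v) (hg : IsStarGauge g) : 0 < ⟪x, v⟫ := by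
  have hv := h.2 v
  rw [real_inner_self_eq_norm_sq, h.1, one_pow] at hv
  exact pos_of_mul_pos_right (one_pos.trans_le hv) (hg.nonneg v)

lemma eq_inner_smul_gradient [CompleteSpace E] (h : IsOuterNormal g x v) (hx : g x = 1)
    (hd : DifferentiableAt ℝ g x) : v = ⟪x, v⟫ • gradient g x := by
  have hmin : IsLocalMin (fun y => g y * ⟪x, v⟫ - ⟪v, y⟫) x :=
    .of_forall fun y => by
      change g x * ⟪x, v⟫ - ⟪v, x⟫ ≤ g y * ⟪x, v⟫ - ⟪v, y⟫
      rw [hx, one_mul, real_inner_comm x v, sub_self, real_inner_comm y v]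
      exact sub_nonneg.2 (h.2 y)
  have hzero := hmin.hasFDerivAt_eq_zero
    ((hd.hasFDerivAt.mul_const ⟪x, v⟫).sub (innerSL ℝ v).hasFDerivAt)
  rw [gradient, ← map_smul, eq_comm, LinearIsometryEquiv.symm_apply_eq]
  exact sub_eq_zero.1 hzero

lemma eq [CompleteSpace E] (hv : IsOuterNormal g x v) (hw : IsOuterNormal g x w)
    (hg : IsStarGauge g) (hx : g x = 1) (hd : DifferentiableAt ℝ g x) : v = w := by
  refine (sameRay_iff_of_norm_eq (hv.1.trans hw.1.symm)).1 ?_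
  rw [hv.eq_inner_smul_gradient hx hd, hw.eq_inner_smul_gradient hx hd]
  exact ((SameRay.refl _).nonneg_smul_left (hv.inner_pos hg).le).nonneg_smul_right
    (hw.inner_pos hg).le

end IsOuterNormal

variable {ν : E → E}

-- The relation `IsOuterNormal g` has closed graph and values in the compact unit sphere.
lemma continuousWithinAt_normal [FiniteDimensional ℝ E]
    (hν : ∀ x, g x = 1 → IsOuterNormal g x (ν x))
    (huniq : ∀ v, IsOuterNormal g x₀ v → v = ν x₀) :
    ContinuousWithinAt ν {x | g x = 1} x₀ := by
  refine (isCompact_sphere (0 : E) 1).tendsto_nhds_of_unique_mapClusterPt ?_ fun v hv hcl => ?_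
  · filter_upwards [self_mem_nhdsWithin] with x hx
    exact mem_sphere_zero_iff_norm.2 (hν x hx).1
  · refine huniq v ⟨mem_sphere_zero_iff_norm.1 hv, fun y => ?_⟩
    by_contra! hlt
    have hopen : IsOpen {z : E × E | g y * ⟪z.1, z.2⟫ < ⟪y, z.2⟫} :=
      isOpen_lt (by fun_prop) (by fun_prop)
    obtain ⟨U, hU, V, hV, hUV⟩ := mem_nhds_prod_iff.1 (hopen.mem_nhds (x := (x₀, v)) hlt)
    obtain ⟨x, hxV, hxU, hx⟩ := ((hcl.frequently hV).and_eventually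
      ((eventually_mem_set.2 (mem_nhdsWithin_of_mem_nhds hU)).and self_mem_nhdsWithin)).exists
    exact absurd ((hν x hx).2 y) (not_le.2 (hUV (mk_mem_prod hxU hxV)))

open Asymptotics in
lemma isLittleO_inner_sub_normal (hν : ∀ x, g x = 1 → IsOuterNormal g x (ν x))
    (hcont : ContinuousWithinAt ν {x | g x = 1} x₀) :
    (fun p : E × E => ⟪p.1 - p.2, ν x₀⟫) =o[𝓝[{x | g x = 1}] x₀ ×ˢ 𝓝[{x | g x = 1}] x₀]
      fun p => p.1 - p.2 := by
  refine isLittleO_iff.2 fun ε hε => ?_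
  have hclose : ∀ᶠ x in 𝓝[{x | g x = 1}] x₀, ‖ν x₀ - ν x‖ < ε := by
    filter_upwards [hcont.eventually (ball_mem_nhds _ hε)] with x hx
    rwa [← dist_eq_norm, dist_comm]
  have hsep {x y : E} (hx : g x = 1) (hy : g y = 1) (hxε : ‖ν x₀ - ν x‖ < ε) :
      ⟪y - x, ν x₀⟫ ≤ ε * ‖x - y‖ := by
    have hsupp : ⟪y - x, ν x⟫ ≤ 0 := by
      rw [inner_sub_left, sub_nonpos, ← one_mul ⟪x, ν x⟫, ← hy]
      exact (hν x hx).2 y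
    calc ⟪y - x, ν x₀⟫ = ⟪y - x, ν x₀ - ν x⟫ + ⟪y - x, ν x⟫ := by rw [inner_sub_right]; ring
      _ ≤ ‖y - x‖ * ‖ν x₀ - ν x‖ + 0 := add_le_add (real_inner_le_norm _ _) hsupp
      _ ≤ ε * ‖x - y‖ := by rw [add_zero, norm_sub_rev y, mul_comm]; gcongr
  filter_upwards [(hclose.and self_mem_nhdsWithin).prod_mk (hclose.and self_mem_nhdsWithin)]
    with ⟨x, y⟩ ⟨⟨hxε, hx⟩, hyε, hy⟩
  refine abs_le.2 ⟨?_, norm_sub_rev x y ▸ hsep hy hx hyε⟩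
  rw [neg_le, ← inner_neg_left, neg_sub]
  exact hsep hx hy hxε

/-- The central projection onto the hyperplane `⟪·, v⟫ = b`. -/
noncomputable def centralProj (v : E) (b : ℝ) (x : E) : E := (b / ⟪x, v⟫) • x

lemma hasStrictFDerivAt_centralProj (h : ⟪x₀, v⟫ ≠ 0) :
    HasStrictFDerivAt (centralProj v ⟪x₀, v⟫)
      (ContinuousLinearMap.id ℝ E - (innerSL ℝ v).smulRight (⟪x₀, v⟫⁻¹ • x₀)) x₀ := by
  have hinner : HasStrictFDerivAt (fun x => ⟪x, v⟫) (innerSL ℝ v) x₀ :=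
    (innerSL ℝ v).hasStrictFDerivAt.congr_of_eventuallyEq
      (.of_forall fun y => real_inner_comm y v)
  refine ((((hasStrictDerivAt_inv h).comp_hasStrictFDerivAt x₀ hinner).const_mul ⟪x₀, v⟫).smul
    (hasStrictFDerivAt_id x₀)).congr_fderiv ?_
  ext w
  have hscalar : ⟪x₀, v⟫ * (⟪x₀, v⟫ ^ 2)⁻¹ * ⟪v, w⟫ = ⟪v, w⟫ * ⟪x₀, v⟫⁻¹ := by
    field_simp
  simp [mul_inv_cancel₀ h, hscalar, smul_smul, sub_eq_add_neg]

-- The derivative of the projection differs from the identity by a multiple of `⟪·, ν x₀⟫`, which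
-- is negligible on differences of boundary points.
open Asymptotics in
lemma isLittleO_centralProj_sub_sub (hg : IsStarGauge g)
    (hν : ∀ x, g x = 1 → IsOuterNormal g x (ν x)) (hx₀ : g x₀ = 1)
    (hcont : ContinuousWithinAt ν {x | g x = 1} x₀) :
    (fun p : E × E => centralProj (ν x₀) ⟪x₀, ν x₀⟫ p.1 - centralProj (ν x₀) ⟪x₀, ν x₀⟫ p.2
        - (p.1 - p.2)) =o[𝓝[{x | g x = 1}] x₀ ×ˢ 𝓝[{x | g x = 1}] x₀] fun p => p.1 - p.2 := by
  have hle : 𝓝[{x | g x = 1}] x₀ ×ˢ 𝓝[{x | g x = 1}] x₀ ≤ 𝓝 (x₀, x₀) :=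
    nhds_prod_eq (x := x₀) (y := x₀) ▸ Filter.prod_mono nhdsWithin_le_nhds nhdsWithin_le_nhds
  have hstrict := (hasStrictFDerivAt_centralProj ((hν x₀ hx₀).inner_pos hg).ne').isLittleO.mono hle
  have htangent : (fun p : E × E => ⟪p.1 - p.2, ν x₀⟫ • (⟪x₀, ν x₀⟫⁻¹ • x₀))
      =o[𝓝[{x | g x = 1}] x₀ ×ˢ 𝓝[{x | g x = 1}] x₀] fun p => p.1 - p.2 :=
    (IsBigO.of_bound ‖⟪x₀, ν x₀⟫⁻¹ • x₀‖ (.of_forall fun p => by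
      rw [norm_smul, mul_comm])).trans_isLittleO (isLittleO_inner_sub_normal hν hcont)
  refine (hstrict.sub htangent).congr_left fun p => ?_
  simp only [sub_apply, ContinuousLinearMap.id_apply,
    ContinuousLinearMap.smulRight_apply, innerSL_apply_apply, real_inner_comm]
  abel

lemma eventually_dist_centralProj_le (hg : IsStarGauge g)
    (hν : ∀ x, g x = 1 → IsOuterNormal g x (ν x)) (hx₀ : g x₀ = 1)
    (hcont : ContinuousWithinAt ν {x | g x = 1} x₀) {s : ℝ} (hs : 1 < s) :
    ∀ᶠ p : E × E in 𝓝[{x | g x = 1}] x₀ ×ˢ 𝓝[{x | g x = 1}] x₀,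
      dist (centralProj (ν x₀) ⟪x₀, ν x₀⟫ p.1) (centralProj (ν x₀) ⟪x₀, ν x₀⟫ p.2)
        ≤ s * dist p.1 p.2 ∧
      dist p.1 p.2 ≤
        s * dist (centralProj (ν x₀) ⟪x₀, ν x₀⟫ p.1) (centralProj (ν x₀) ⟪x₀, ν x₀⟫ p.2) := by
  have hs0 : 0 < s := one_pos.trans hs
  have hε : 0 < 1 - s⁻¹ := sub_pos.2 (inv_lt_one_of_one_lt₀ hs)
  have hsum : 2 - s⁻¹ ≤ s := by
    field_simp
    nlinarith [sq_nonneg (s - 1)]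
  filter_upwards [(isLittleO_centralProj_sub_sub hg hν hx₀ hcont).bound hε] with ⟨x, y⟩ hxy
  simp only [dist_eq_norm] at hxy ⊢
  set P := centralProj (ν x₀) ⟪x₀, ν x₀⟫
  constructor
  · have htri := norm_sub_norm_le (P x - P y) (x - y)
    calc ‖P x - P y‖ ≤ (2 - s⁻¹) * ‖x - y‖ := by linarith
      _ ≤ s * ‖x - y‖ := by gcongr
  · have htri := norm_sub_norm_le (x - y) (P x - P y)
    rw [norm_sub_rev (x - y)] at htri
    exact (inv_mul_le_iff₀ hs0).1 (by linarith)

end Gauges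

section ConeMeasure

lemma norm_coe_unitSphere {E : Type*} [NormedAddCommGroup E] (u : sphere (0 : E) 1) :
    ‖(u : E)‖ = 1 :=
  mem_sphere_zero_iff_norm.1 u.2

variable {E : Type*} [NormedAddCommGroup E] [InnerProductSpace ℝ E] {g : E → ℝ}

/-- The radial projection onto the boundary of the star body with gauge `g`. It maps `0` to `0`. -/
noncomputable def radialProj (g : E → ℝ) (x : E) : E := (g x)⁻¹ • x

namespace IsStarGauge

lemma map_radialProj (hg : IsStarGauge g) {x : E} (hx : x ≠ 0) : g (radialProj g x) = 1 := by
  rw [radialProj, hg.map_smul _ (inv_nonneg.2 (hg.nonneg x)), inv_mul_cancel₀ (hg.pos hx).ne']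

lemma smul_mem_Ioo_smul_iff (hg : IsStarGauge g) {A : Set E} (hA : ∀ x ∈ A, g x = 1) {u : E}
    (hu : u ≠ 0) {r : ℝ} (hr : 0 < r) :
    r • u ∈ Ioo (0 : ℝ) 1 • A ↔ r < (g u)⁻¹ ∧ radialProj g u ∈ A := by
  have hgu := hg.pos hu
  rw [radialProj, Ioo_smul_eq_of_homogeneous hg.map_smul one_pos hA, mem_ofPred_eq,
    hg.map_smul r hr.le, smul_smul, one_div, mul_inv, mul_right_comm,
    inv_mul_cancel₀ hr.ne', one_mul, ← one_div, lt_div_iff₀ hgu]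
  exact ⟨fun h => h.2, fun h => ⟨mul_pos hr hgu, h⟩⟩

lemma measurable_radialProj [MeasurableSpace E] [BorelSpace E] [SecondCountableTopology E]
    (hg : IsStarGauge g) : Measurable (radialProj g) := by
  have := hg.continuous.measurable
  unfold radialProj
  fun_prop

lemma exists_lipschitzOnWith_radialProj (hg : IsStarGauge g) {c : ℝ} (hc : 0 < c) {R : ℝ}
    (hR : 0 ≤ R) : ∃ K, LipschitzOnWith K (radialProj g) {x | c ≤ g x ∧ ‖x‖ ≤ R} := by
  obtain ⟨C, hC⟩ := hg.exists_lipschitzWith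
  refine ⟨(c⁻¹ + C / (c * c) * R).toNNReal, .of_dist_le_mul fun x ⟨hx, _⟩ y ⟨hy, hyR⟩ => ?_⟩
  have hgx : 0 < g x := hc.trans_le hx
  have hgy : 0 < g y := hc.trans_le hy
  have hinv : |(g x)⁻¹ - (g y)⁻¹| ≤ C * ‖x - y‖ / (c * c) := by
    rw [inv_sub_inv hgx.ne' hgy.ne', abs_div, abs_of_pos (mul_pos hgx hgy), abs_sub_comm]
    gcongr
    simpa only [dist_eq_norm, Real.norm_eq_abs] using hC.dist_le_mul x y
  rw [Real.coe_toNNReal _ (by positivity), dist_eq_norm, dist_eq_norm]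
  calc ‖(g x)⁻¹ • x - (g y)⁻¹ • y‖ = ‖(g x)⁻¹ • (x - y) + ((g x)⁻¹ - (g y)⁻¹) • y‖ := by
        congr 1; module
    _ ≤ (g x)⁻¹ * ‖x - y‖ + |(g x)⁻¹ - (g y)⁻¹| * ‖y‖ := by
        refine (norm_add_le _ _).trans_eq ?_
        rw [norm_smul, norm_smul, Real.norm_of_nonneg (inv_pos.2 hgx).le, Real.norm_eq_abs]
    _ ≤ c⁻¹ * ‖x - y‖ + C * ‖x - y‖ / (c * c) * R := by gcongr
    _ = (c⁻¹ + C / (c * c) * R) * ‖x - y‖ := by ring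

end IsStarGauge

variable [MeasurableSpace E] [BorelSpace E] [FiniteDimensional ℝ E]

lemma lintegral_eq_lintegral_toSphere [Nontrivial E] {F : E → ℝ≥0∞} (hF : Measurable F) :
    ∫⁻ x, F x = ∫⁻ u : sphere (0 : E) 1, ∫⁻ r in Ioi (0 : ℝ),
      ENNReal.ofReal (r ^ (finrank ℝ E - 1)) * F (r • (u : E)) ∂volume
        ∂(volume : Measure E).toSphere := by
  set G : sphere (0 : E) 1 × Ioi (0 : ℝ) → ℝ≥0∞ := fun y => F ((y.2 : ℝ) • (y.1 : E))
  have hG : Measurable G := by fun_prop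
  have hFG (x : ({0}ᶜ : Set E)) : F x = G (homeomorphUnitSphereProd E x) := by
    have hx : ‖(x : E)‖ ≠ 0 := norm_ne_zero_iff.2 x.2
    simp [G, smul_smul, hx]
  calc ∫⁻ x, F x = ∫⁻ x in ({0}ᶜ : Set E), F x := by
        rw [Measure.restrict_eq_self_of_ae_mem]
        exact compl_mem_ae_iff.2 (measure_singleton 0)
    _ = ∫⁻ x : ({0}ᶜ : Set E), G (homeomorphUnitSphereProd E x)
          ∂(volume : Measure E).comap Subtype.val := by
        rw [← lintegral_subtype_comap (measurableSet_singleton (0 : E)).compl, lintegral_congr hFG]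
    _ = ∫⁻ u, ∫⁻ r, G (u, r) ∂Measure.volumeIoiPow (finrank ℝ E - 1)
          ∂(volume : Measure E).toSphere := by
        rw [(volume : Measure E).measurePreserving_homeomorphUnitSphereProd.lintegral_comp hG,
          lintegral_prod _ hG.aemeasurable]
    _ = _ := by
        refine lintegral_congr fun u => ?_
        rw [Measure.volumeIoiPow, lintegral_withDensity_eq_lintegral_mul _ (by fun_prop)
          (by fun_prop), ← lintegral_subtype_comap measurableSet_Ioi]
        rfl

/-- The cone measure of the star body with gauge `g`, a measure on its boundary. In polar
coordinates, the cone over the direction `u` has volume element `(g u)⁻ⁿ / n`; the factor `1 / n` is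
dropped. -/
noncomputable def coneMeasure (g : E → ℝ) : Measure E :=
  ((volume : Measure E).toSphere.withDensity
    fun u => ENNReal.ofReal ((g u)⁻¹ ^ finrank ℝ E)).map
      fun u : sphere (0 : E) 1 => radialProj g (u : E)

namespace IsStarGauge

lemma measurable_radialProj_coe (hg : IsStarGauge g) :
    Measurable fun u : sphere (0 : E) 1 => radialProj g (u : E) :=
  hg.measurable_radialProj.comp measurable_subtype_coe

lemma lintegral_coneMeasure (hg : IsStarGauge g) {f : E → ℝ≥0∞} (hf : Measurable f) :
    ∫⁻ x, f x ∂coneMeasure g = ∫⁻ u : sphere (0 : E) 1,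
      ENNReal.ofReal ((g u)⁻¹ ^ finrank ℝ E) * f (radialProj g u)
        ∂(volume : Measure E).toSphere := by
  have hgm := hg.continuous.measurable
  rw [coneMeasure, lintegral_map hf hg.measurable_radialProj_coe]
  exact lintegral_withDensity_eq_lintegral_mul _ (by fun_prop)
    (hf.comp hg.measurable_radialProj_coe)

lemma coneMeasure_compl_level_one (hg : IsStarGauge g) : coneMeasure g {x | g x = 1}ᶜ = 0 := by
  rw [coneMeasure, Measure.map_apply hg.measurable_radialProj_coe
    hg.measurableSet_level_one.compl]
  refine measure_mono_null (fun u hu => ?_) measure_empty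
  exact hu (hg.map_radialProj (ne_zero_of_mem_unit_sphere u))

lemma coneMeasure_apply [Nontrivial E] (hg : IsStarGauge g) {A : Set E} (hAm : MeasurableSet A)
    (hA : ∀ x ∈ A, g x = 1) :
    coneMeasure g A = finrank ℝ E * volume (Ioo (0 : ℝ) 1 • A) := by
  have hN : 0 < finrank ℝ E := finrank_pos
  have hcone := measurableSet_Ioo_smul_of_homogeneous hg.map_smul hg.continuous.measurable
    one_pos hA hAm
  rw [← lintegral_indicator_one hAm, hg.lintegral_coneMeasure (measurable_one.indicator hAm),
    ← lintegral_indicator_one hcone,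
    lintegral_eq_lintegral_toSphere (measurable_one.indicator hcone),
    ← lintegral_const_mul' _ _ (ENNReal.natCast_ne_top _)]
  refine lintegral_congr fun u => ?_
  have hu := ne_zero_of_mem_unit_sphere u
  have hray : EqOn (fun r => ENNReal.ofReal (r ^ (finrank ℝ E - 1)) *
        (Ioo (0 : ℝ) 1 • A).indicator (1 : E → ℝ≥0∞) (r • (u : E)))
      ((Iio (g u)⁻¹).indicator fun r => ENNReal.ofReal (r ^ (finrank ℝ E - 1)) *
        A.indicator (1 : E → ℝ≥0∞) (radialProj g u)) (Ioi 0) := by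
    intro r hr
    have hiff := hg.smul_mem_Ioo_smul_iff hA hu hr
    by_cases h : r < (g u)⁻¹ <;> by_cases h' : radialProj g (u : E) ∈ A <;>
      simp only [h, h', and_true, and_false] at hiff <;> simp [h, h', hiff]
  rw [setLIntegral_congr_fun measurableSet_Ioi hray, setLIntegral_indicator measurableSet_Iio,
    inter_comm, Ioi_inter_Iio, lintegral_mul_const _ (by fun_prop),
    lintegral_Ioo_pow _ (inv_pos.2 (hg.pos hu)), ← mul_assoc]
  congr 1
  rw [← ENNReal.ofReal_natCast, ← ENNReal.ofReal_mul (by positivity), Nat.sub_add_cancel hN,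
    ← Nat.cast_add_one, Nat.sub_add_cancel hN, mul_div_cancel₀ _ (by positivity)]

end IsStarGauge

end ConeMeasure

section AreaFormula

lemma measure_le_of_locally_le {X : Type*} [TopologicalSpace X] [SecondCountableTopology X]
    [MeasurableSpace X] [OpensMeasurableSpace X] {m₁ m₂ : Measure X} {S A : Set X}
    (h : ∀ x ∈ S, ∃ U ∈ 𝓝[S] x, ∀ B ⊆ U, MeasurableSet B → m₁ B ≤ m₂ B)
    (hA : MeasurableSet A) (hAS : A ⊆ S) : m₁ A ≤ m₂ A := by
  choose! U hU hle using h
  have hopen : ∀ x ∈ S, ∃ V, IsOpen V ∧ x ∈ V ∧ V ∩ S ⊆ U x := fun x hx =>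
    mem_nhdsWithin.1 (hU x hx)
  choose! V hV hxV hVU using hopen
  obtain ⟨t, htS, ht, hcover⟩ := TopologicalSpace.countable_cover_nhdsWithin
    fun x hx => mem_nhdsWithin_of_mem_nhds ((hV x hx).mem_nhds (hxV x hx))
  rcases A.eq_empty_or_nonempty with rfl | ⟨a, ha⟩
  · simp only [measure_empty, le_refl]
  obtain ⟨x, hxt, -⟩ := mem_iUnion₂.1 (hcover (hAS ha))
  obtain ⟨c, rfl⟩ := ht.exists_eq_range ⟨x, hxt⟩
  rw [biUnion_range] at hcover
  have hc (i : ℕ) : c i ∈ S := htS (mem_range_self i)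
  have hm (i : ℕ) : MeasurableSet (A ∩ disjointed (fun j => V (c j)) i) :=
    hA.inter (.disjointed (fun j => (hV _ (hc j)).measurableSet) i)
  have hd : Pairwise (Function.onFun Disjoint fun i => A ∩ disjointed (fun j => V (c j)) i) :=
    fun i j hij => (disjoint_disjointed _ hij).mono inter_subset_right inter_subset_right
  have hunion : A = ⋃ i, A ∩ disjointed (fun j => V (c j)) i := by
    rw [← inter_iUnion, iUnion_disjointed, inter_eq_left.2 (hAS.trans hcover)]
  rw [hunion, measure_iUnion hd hm, measure_iUnion hd hm]
  exact ENNReal.tsum_le_tsum fun i => hle _ (hc i) _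
    (fun x hx => hVU _ (hc i) ⟨disjointed_subset _ i hx.2, hAS hx.1⟩) (hm i)

lemma euclideanHausdorffMeasure_image_le {X Y : Type*} [EMetricSpace X] [MeasurableSpace X]
    [BorelSpace X] [EMetricSpace Y] [MeasurableSpace Y] [BorelSpace Y] {f : X → Y} {K : NNReal}
    {s : Set X} (d : ℕ) (h : LipschitzOnWith K f s) :
    μHE[d] (f '' s) ≤ (K : ℝ≥0∞) ^ d * μHE[d] s := by
  rw [Measure.euclideanHausdorffMeasure_def, Measure.euclideanHausdorffMeasure_def,
    Measure.smul_apply, Measure.smul_apply, mul_smul_comm]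
  gcongr
  simpa only [ENNReal.rpow_natCast] using h.hausdorffMeasure_image_le d.cast_nonneg

lemma euclideanHausdorffMeasure_le_image {X Y : Type*} [MetricSpace X] [MeasurableSpace X]
    [BorelSpace X] [MetricSpace Y] [MeasurableSpace Y] [BorelSpace Y] {f : X → Y} {K : NNReal}
    {s : Set X} (d : ℕ) (h : ∀ x ∈ s, ∀ y ∈ s, dist x y ≤ K * dist (f x) (f y)) :
    μHE[d] s ≤ (K : ℝ≥0∞) ^ d * μHE[d] (f '' s) := by
  rcases s.eq_empty_or_nonempty with rfl | ⟨a, -⟩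
  · simp only [measure_empty, zero_le]
  have : Nonempty X := ⟨a⟩
  have hinj : InjOn f s := fun x hx y hy hxy => by
    simpa only [hxy, dist_self, mul_zero, dist_le_zero] using h x hx y hy
  have hinv := hinj.leftInvOn_invFunOn
  have hlip : LipschitzOnWith K (Function.invFunOn f s) (f '' s) := by
    refine .of_dist_le_mul ?_
    rintro _ ⟨x, hx, rfl⟩ _ ⟨y, hy, rfl⟩
    rw [hinv hx, hinv hy]
    exact h x hx y hy
  simpa only [hinv.image_image] using euclideanHausdorffMeasure_image_le d hlip

variable {E : Type*} [NormedAddCommGroup E] [InnerProductSpace ℝ E] {g : E → ℝ} {v : E}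
  {b s : ℝ} {A : Set E}

lemma Ioo_smul_subset_Ioo_smul_centralProj (hpos : ∀ x ∈ A, 0 < ⟪x, v⟫)
    (hle : ∀ x ∈ A, ⟪x, v⟫ ≤ b) :
    Ioo (0 : ℝ) 1 • A ⊆ Ioo (0 : ℝ) 1 • (centralProj v b '' A) := by
  rintro _ ⟨t, ht, x, hx, rfl⟩
  have hx0 := hpos x hx
  have hb : 0 < b := hx0.trans_le (hle x hx)
  refine ⟨t * (⟪x, v⟫ / b), ⟨mul_pos ht.1 (div_pos hx0 hb), ?_⟩, _, mem_image_of_mem _ hx, ?_⟩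
  · exact mul_lt_one_of_nonneg_of_lt_one_left ht.1.le ht.2 ((div_le_one hb).2 (hle x hx))
  · simp only [centralProj, smul_smul]
    congr 1
    field_simp

lemma Ioo_smul_centralProj_subset (hs : 0 < s) (hb : 0 < b) (hpos : ∀ x ∈ A, 0 < ⟪x, v⟫)
    (hle : ∀ x ∈ A, b ≤ s * ⟪x, v⟫) :
    Ioo (0 : ℝ) 1 • (centralProj v b '' A) ⊆ s • (Ioo (0 : ℝ) 1 • A) := by
  rintro _ ⟨t, ht, _, ⟨x, hx, rfl⟩, rfl⟩
  have hx0 := hpos x hx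
  refine ⟨_, ⟨t * (b / (s * ⟪x, v⟫)), ⟨mul_pos ht.1 (by positivity), ?_⟩, x, hx, rfl⟩, ?_⟩
  · exact mul_lt_one_of_nonneg_of_lt_one_left ht.1.le ht.2
      ((div_le_one (by positivity)).2 (hle x hx))
  · simp only [centralProj, smul_smul]
    congr 1
    field_simp

lemma tendsto_ofReal_pow_mul (k : ℕ) (a : ℝ≥0∞) :
    Tendsto (fun s => ENNReal.ofReal s ^ k * a) (𝓝[>] 1) (𝓝 a) := by
  have hpow : Continuous fun s => ENNReal.ofReal s ^ k :=
    (ENNReal.continuous_pow k).comp ENNReal.continuous_ofReal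
  have hlim := hpow.continuousWithinAt (s := Ioi 1) (x := 1)
  simpa using ENNReal.Tendsto.mul_const hlim.tendsto (.inl (by simp))

/-- The boundary points of the star body with gauge `g` at which the gauge is differentiable. -/
def regularBoundary (g : E → ℝ) : Set E := {x | g x = 1 ∧ DifferentiableAt ℝ g x}

lemma compl_regularBoundary_subset (g : E → ℝ) :
    (regularBoundary g)ᶜ ⊆ {x | g x = 1}ᶜ ∪ {x | g x = 1 ∧ ¬DifferentiableAt ℝ g x} := by
  intro x hx
  by_cases hgx : g x = 1
  · exact .inr ⟨hgx, fun hd => hx ⟨hgx, hd⟩⟩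
  · exact .inl hgx

/-- A piece `A` of the boundary of the star body with gauge `g` which, up to the factor `s`, looks
like a piece of the hyperplane `⟪·, v⟫ = b` both for distances and for the weight `⟪x, ν x⟫`. -/
structure IsFlatPatch (g : E → ℝ) (ν : E → E) (v : E) (b s : ℝ) (A : Set E) : Prop where
  level : ∀ x ∈ A, g x = 1
  inner_pos : ∀ x ∈ A, 0 < ⟪x, v⟫
  inner_le : ∀ x ∈ A, ⟪x, v⟫ ≤ b
  le_mul_inner : ∀ x ∈ A, b ≤ s * ⟪x, v⟫
  weight_le : ∀ x ∈ A, ⟪x, ν x⟫ ≤ s * b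
  le_mul_weight : ∀ x ∈ A, b ≤ s * ⟪x, ν x⟫
  dist_centralProj_le : ∀ x ∈ A, ∀ y ∈ A,
    dist (centralProj v b x) (centralProj v b y) ≤ s * dist x y
  dist_le : ∀ x ∈ A, ∀ y ∈ A, dist x y ≤ s * dist (centralProj v b x) (centralProj v b y)

variable {ν : E → E} {x₀ : E}

lemma exists_isFlatPatch (hg : IsStarGauge g) (hν : ∀ x, g x = 1 → IsOuterNormal g x (ν x))
    (hx₀ : g x₀ = 1) (hcont : ContinuousWithinAt ν {x | g x = 1} x₀) (hs : 1 < s) :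
    ∃ U ∈ 𝓝[{x | g x = 1}] x₀, ∀ A ⊆ U, IsFlatPatch g ν (ν x₀) ⟪x₀, ν x₀⟫ s A := by
  set v := ν x₀
  set b := ⟪x₀, v⟫
  have hb : 0 < b := (hν x₀ hx₀).inner_pos hg
  have hlt : b < s * b := lt_mul_of_one_lt_left hb hs
  have hinner : ContinuousWithinAt (fun x => ⟪x, v⟫) {x | g x = 1} x₀ := by fun_prop
  have hweight : ContinuousWithinAt (fun x => ⟪x, ν x⟫) {x | g x = 1} x₀ :=
    continuousWithinAt_id.inner hcont
  obtain ⟨T, hT, hTdist⟩ := eventually_prod_self_iff'.1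
    (eventually_dist_centralProj_le hg hν hx₀ hcont hs)
  have hnear : ∀ᶠ x in 𝓝[{x | g x = 1}] x₀, 0 < ⟪x, v⟫ ∧ b < s * ⟪x, v⟫ ∧ ⟪x, ν x⟫ < s * b ∧
      b < s * ⟪x, ν x⟫ :=
    (hinner.eventually_const_lt hb).and <| ((hinner.const_mul s).eventually_const_lt hlt).and <|
      (hweight.eventually_lt_const hlt).and ((hweight.const_mul s).eventually_const_lt hlt)
  refine ⟨_, inter_mem hT (inter_mem self_mem_nhdsWithin hnear), fun A hA => ⟨?_, ?_, ?_, ?_, ?_,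
    ?_, ?_, ?_⟩⟩
  · exact fun x hx => (hA hx).2.1
  · exact fun x hx => (hA hx).2.2.1
  · intro x hx
    have hxv := (hν x₀ hx₀).2 x
    rwa [(hA hx).2.1, one_mul] at hxv
  · exact fun x hx => (hA hx).2.2.2.1.le
  · exact fun x hx => (hA hx).2.2.2.2.1.le
  · exact fun x hx => (hA hx).2.2.2.2.2.le
  · exact fun x hx y hy => (hTdist x (hA hx).1 y (hA hy).1).1
  · exact fun x hx y hy => (hTdist x (hA hx).1 y (hA hy).1).2

lemma exists_isFlatPatch_of_mem_regularBoundary [FiniteDimensional ℝ E] (hg : IsStarGauge g)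
    (hν : ∀ x, g x = 1 → IsOuterNormal g x (ν x)) (hx : x₀ ∈ regularBoundary g) (hs : 1 < s) :
    ∃ U ∈ 𝓝[regularBoundary g] x₀, ∀ A ⊆ U, IsFlatPatch g ν (ν x₀) ⟪x₀, ν x₀⟫ s A := by
  obtain ⟨U, hU, h⟩ := exists_isFlatPatch hg hν hx.1 (continuousWithinAt_normal hν fun v hv =>
    hv.eq (hν x₀ hx.1) hg hx.1 hx.2) hs
  exact ⟨U, nhdsWithin_mono _ (fun y hy => hy.1) hU, h⟩

variable [MeasurableSpace E] [BorelSpace E]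

/-- The boundary measure `⟪x, ν x⟫ dH^{n-1}`, with respect to the normal field `ν`, of the star body
with gauge `g`. The Hausdorff measure is normalised to agree with Lebesgue measure. -/
noncomputable def supportMeasure (g : E → ℝ) (ν : E → E) : Measure E :=
  (μHE[finrank ℝ E - 1].restrict {x | g x = 1}).withDensity fun x => ENNReal.ofReal ⟪x, ν x⟫

lemma measurableSet_regularBoundary (hg : IsStarGauge g) :
    MeasurableSet (regularBoundary g) :=
  hg.measurableSet_level_one.inter (measurableSet_of_differentiableAt ℝ g)

lemma supportMeasure_apply (hAm : MeasurableSet A) (hA : ∀ x ∈ A, g x = 1) :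
    supportMeasure g ν A = ∫⁻ x in A, ENNReal.ofReal ⟪x, ν x⟫ ∂μHE[finrank ℝ E - 1] := by
  rw [supportMeasure, withDensity_apply _ hAm, Measure.restrict_restrict hAm,
    inter_eq_left.2 (show A ⊆ {x | g x = 1} from hA)]

variable [FiniteDimensional ℝ E]

namespace IsFlatPatch

lemma measurableSet_image (h : IsFlatPatch g ν v b s A) (hAm : MeasurableSet A) :
    MeasurableSet (centralProj v b '' A) := by
  refine hAm.image_of_continuousOn_injOn (fun x hx => ?_) fun x hx y hy hxy => ?_
  · have hx0 : ⟪x, v⟫ ≠ 0 := (h.inner_pos x hx).ne'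
    unfold centralProj
    fun_prop (disch := assumption)
  · simpa only [hxy, dist_self, mul_zero, dist_le_zero] using h.dist_le x hx y hy

lemma finrank_mul_volume_image (h : IsFlatPatch g ν v b s A) (hE : 0 < finrank ℝ E)
    (hv : ‖v‖ = 1) (hb : 0 < b) (hAm : MeasurableSet A) :
    finrank ℝ E * volume (Ioo (0 : ℝ) 1 • (centralProj v b '' A)) =
      ENNReal.ofReal b * μHE[finrank ℝ E - 1] (centralProj v b '' A) := by
  rw [← volume_Ioo_smul_of_inner_eq (Nat.sub_add_cancel hE).symm hv hb _
    (h.measurableSet_image hAm), ← Nat.cast_add_one, Nat.sub_add_cancel hE]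
  rintro _ ⟨x, hx, rfl⟩
  rw [centralProj, real_inner_smul_left, div_mul_cancel₀ _ (h.inner_pos x hx).ne']

lemma coneMeasure_le [Nontrivial E] (h : IsFlatPatch g ν v b s A) (hg : IsStarGauge g)
    (hv : ‖v‖ = 1) (hb : 0 < b) (hs : 0 < s) (hνm : Measurable ν) (hAm : MeasurableSet A) :
    coneMeasure g A ≤ ENNReal.ofReal s ^ finrank ℝ E * supportMeasure g ν A := by
  have hE : 0 < finrank ℝ E := finrank_pos
  have hweight : ENNReal.ofReal b * μHE[finrank ℝ E - 1] A
      ≤ ENNReal.ofReal s * supportMeasure g ν A := by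
    rw [supportMeasure_apply hAm h.level, ← setLIntegral_const,
      ← lintegral_const_mul _ (by fun_prop)]
    refine setLIntegral_mono' hAm fun x hx => ?_
    rw [← ENNReal.ofReal_mul hs.le]
    exact ENNReal.ofReal_le_ofReal (h.le_mul_weight x hx)
  have hlip : LipschitzOnWith s.toNNReal (centralProj v b) A := .of_dist_le_mul <| by
    simpa only [Real.coe_toNNReal _ hs.le] using h.dist_centralProj_le
  calc coneMeasure g A = finrank ℝ E * volume (Ioo (0 : ℝ) 1 • A) :=
        hg.coneMeasure_apply hAm h.level
    _ ≤ finrank ℝ E * volume (Ioo (0 : ℝ) 1 • (centralProj v b '' A)) := by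
        gcongr (finrank ℝ E : ℝ≥0∞) * volume ?_
        exact Ioo_smul_subset_Ioo_smul_centralProj h.inner_pos h.inner_le
    _ = ENNReal.ofReal b * μHE[finrank ℝ E - 1] (centralProj v b '' A) :=
        h.finrank_mul_volume_image hE hv hb hAm
    _ ≤ ENNReal.ofReal b * (ENNReal.ofReal s ^ (finrank ℝ E - 1) * μHE[finrank ℝ E - 1] A) := by
        gcongr
        exact euclideanHausdorffMeasure_image_le _ hlip
    _ ≤ ENNReal.ofReal s ^ (finrank ℝ E - 1) * (ENNReal.ofReal s * supportMeasure g ν A) := by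
        rw [mul_left_comm]
        gcongr
    _ = ENNReal.ofReal s ^ finrank ℝ E * supportMeasure g ν A := by
        rw [← mul_assoc, ← pow_succ, Nat.sub_add_cancel hE]

lemma supportMeasure_le [Nontrivial E] (h : IsFlatPatch g ν v b s A) (hg : IsStarGauge g)
    (hv : ‖v‖ = 1) (hb : 0 < b) (hs : 0 < s) (hAm : MeasurableSet A) :
    supportMeasure g ν A ≤ ENNReal.ofReal s ^ (2 * finrank ℝ E) * coneMeasure g A := by
  have hE : 0 < finrank ℝ E := finrank_pos
  have hweight : supportMeasure g ν A
      ≤ ENNReal.ofReal s * ENNReal.ofReal b * μHE[finrank ℝ E - 1] A := by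
    rw [supportMeasure_apply hAm h.level, ← setLIntegral_const]
    refine setLIntegral_mono' hAm fun x hx => ?_
    rw [← ENNReal.ofReal_mul hs.le]
    exact ENNReal.ofReal_le_ofReal (h.weight_le x hx)
  have hexpand : ∀ x ∈ A, ∀ y ∈ A, dist x y ≤
      s.toNNReal * dist (centralProj v b x) (centralProj v b y) := by
    simpa only [Real.coe_toNNReal _ hs.le] using h.dist_le
  have hvol : volume (Ioo (0 : ℝ) 1 • (centralProj v b '' A)) ≤
      ENNReal.ofReal s ^ finrank ℝ E * volume (Ioo (0 : ℝ) 1 • A) := by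
    refine (measure_mono (Ioo_smul_centralProj_subset hs hb h.inner_pos h.le_mul_inner)).trans ?_
    rw [Measure.addHaar_smul, abs_of_pos (pow_pos hs _), ENNReal.ofReal_pow hs.le]
  calc supportMeasure g ν A ≤ ENNReal.ofReal s * ENNReal.ofReal b * μHE[finrank ℝ E - 1] A :=
        hweight
    _ ≤ ENNReal.ofReal s * ENNReal.ofReal b * (ENNReal.ofReal s ^ (finrank ℝ E - 1) *
          μHE[finrank ℝ E - 1] (centralProj v b '' A)) := by
        gcongr
        exact euclideanHausdorffMeasure_le_image _ hexpand
    _ = ENNReal.ofReal s ^ (finrank ℝ E - 1 + 1) *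
          (ENNReal.ofReal b * μHE[finrank ℝ E - 1] (centralProj v b '' A)) := by ring
    _ ≤ ENNReal.ofReal s ^ finrank ℝ E * (finrank ℝ E *
          (ENNReal.ofReal s ^ finrank ℝ E * volume (Ioo (0 : ℝ) 1 • A))) := by
        rw [Nat.sub_add_cancel hE, ← h.finrank_mul_volume_image hE hv hb hAm]
        gcongr
    _ = ENNReal.ofReal s ^ (2 * finrank ℝ E) * coneMeasure g A := by
        rw [hg.coneMeasure_apply hAm h.level]
        ring

end IsFlatPatch

namespace IsStarGauge

lemma volume_Ioo_smul_of_not_differentiableAt (hg : IsStarGauge g)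
    (hA : ∀ x ∈ A, ¬DifferentiableAt ℝ g x) : volume (Ioo (0 : ℝ) 1 • A) = 0 := by
  obtain ⟨C, hC⟩ := hg.exists_lipschitzWith
  refine measure_mono_null ?_ (ae_iff.1 (hC.ae_differentiableAt (μ := volume)))
  rintro _ ⟨t, ht, x, hx, rfl⟩ hd
  exact hA x hx (hg.differentiableAt_of_smul ht.1 hd)

lemma euclideanHausdorffMeasure_not_differentiableAt_of_inner_eq_one (hg : IsStarGauge g)
    (hE : 0 < finrank ℝ E) (hv : ‖v‖ = 1) :
    μHE[finrank ℝ E - 1] {y | ⟪y, v⟫ = 1 ∧ ¬DifferentiableAt ℝ g y} = 0 := by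
  have hm : MeasurableSet {y | ⟪y, v⟫ = 1 ∧ ¬DifferentiableAt ℝ g y} :=
    (measurableSet_eq_fun (by fun_prop) measurable_const).inter
      (measurableSet_of_differentiableAt ℝ g).compl
  have hcone := volume_Ioo_smul_of_inner_eq (Nat.sub_add_cancel hE).symm hv one_pos
    (fun y hy => hy.1) hm
  rw [hg.volume_Ioo_smul_of_not_differentiableAt fun y hy => hy.2, mul_zero, ENNReal.ofReal_one,
    one_mul] at hcone
  exact hcone.symm

lemma euclideanHausdorffMeasure_not_differentiableAt_of_inner_pos (hg : IsStarGauge g)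
    (hE : 0 < finrank ℝ E) (hv : ‖v‖ = 1) :
    μHE[finrank ℝ E - 1] {x | 0 < ⟪x, v⟫ ∧ g x = 1 ∧ ¬DifferentiableAt ℝ g x} = 0 := by
  obtain ⟨c, hc, hcg⟩ := hg.exists_mul_norm_le
  set H : ℕ → Set E := fun k => {y | ⟪y, v⟫ = 1 ∧ ¬DifferentiableAt ℝ g y} ∩ closedBall 0 k
  have hH (k : ℕ) : μHE[finrank ℝ E - 1] (radialProj g '' H k) = 0 := by
    obtain ⟨K, hK⟩ := hg.exists_lipschitzOnWith_radialProj hc k.cast_nonneg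
    have hsub : H k ⊆ {x | c ≤ g x ∧ ‖x‖ ≤ k} := by
      rintro y ⟨⟨hy, -⟩, hyk⟩
      refine ⟨(le_mul_of_one_le_right hc.le ?_).trans (hcg y), mem_closedBall_zero_iff.1 hyk⟩
      simpa only [hy, hv, mul_one] using real_inner_le_norm y v
    have hnull := measure_mono_null (inter_subset_left (t := closedBall 0 (k : ℝ)))
      (hg.euclideanHausdorffMeasure_not_differentiableAt_of_inner_eq_one hE hv)
    have hle := euclideanHausdorffMeasure_image_le (finrank ℝ E - 1) (hK.mono hsub)
    rw [hnull, mul_zero] at hle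
    exact le_antisymm hle zero_le
  refine measure_mono_null ?_ (measure_iUnion_null hH)
  rintro x ⟨hx0, hx1, hxd⟩
  obtain ⟨k, hk⟩ := exists_nat_ge ‖⟪x, v⟫⁻¹ • x‖
  refine mem_iUnion.2 ⟨k, ⟪x, v⟫⁻¹ • x, ⟨⟨?_, ?_⟩, mem_closedBall_zero_iff.2 hk⟩, ?_⟩
  · rw [real_inner_smul_left, inv_mul_cancel₀ hx0.ne']
  · exact fun h => hxd (hg.differentiableAt_of_smul (inv_pos.2 hx0) h)
  · rw [radialProj, hg.map_smul _ (inv_pos.2 hx0).le, hx1, mul_one, inv_inv, smul_smul,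
      mul_inv_cancel₀ hx0.ne', one_smul]

lemma euclideanHausdorffMeasure_not_differentiableAt (hg : IsStarGauge g)
    (hE : 0 < finrank ℝ E) :
    μHE[finrank ℝ E - 1] {x | g x = 1 ∧ ¬DifferentiableAt ℝ g x} = 0 := by
  refine measure_null_of_locally_null _ fun x hx => ?_
  have hx0 : x ≠ 0 := by
    rintro rfl
    exact zero_ne_one (hg.map_zero.symm.trans hx.1)
  have hpos : 0 < ⟪x, ‖x‖⁻¹ • x⟫ := by
    rw [inner_smul_right, real_inner_self_eq_norm_sq]
    have := norm_pos_iff.2 hx0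
    positivity
  have hopen : IsOpen {y : E | 0 < ⟪y, ‖x‖⁻¹ • x⟫} := isOpen_lt continuous_const (by fun_prop)
  exact ⟨_, inter_mem (mem_nhdsWithin_of_mem_nhds (hopen.mem_nhds hpos)) self_mem_nhdsWithin,
    hg.euclideanHausdorffMeasure_not_differentiableAt_of_inner_pos hE (norm_smul_inv_norm hx0)⟩

lemma coneMeasure_compl_regularBoundary [Nontrivial E] (hg : IsStarGauge g) :
    coneMeasure g (regularBoundary g)ᶜ = 0 := by
  refine measure_mono_null (compl_regularBoundary_subset g)
    (measure_union_null hg.coneMeasure_compl_level_one ?_)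
  have hm : MeasurableSet {x | g x = 1 ∧ ¬DifferentiableAt ℝ g x} :=
    hg.measurableSet_level_one.inter (measurableSet_of_differentiableAt ℝ g).compl
  rw [hg.coneMeasure_apply hm fun x hx => hx.1,
    hg.volume_Ioo_smul_of_not_differentiableAt fun x hx => hx.2, mul_zero]

lemma supportMeasure_compl_regularBoundary (hg : IsStarGauge g) (hE : 0 < finrank ℝ E) :
    supportMeasure g ν (regularBoundary g)ᶜ = 0 := by
  refine withDensity_absolutelyContinuous _ _ (measure_mono_null (compl_regularBoundary_subset g)
    (measure_union_null ?_ ?_))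
  · rw [Measure.restrict_apply hg.measurableSet_level_one.compl, compl_inter_self, measure_empty]
  · exact Measure.restrict_le_self.absolutelyContinuous
      (hg.euclideanHausdorffMeasure_not_differentiableAt hE)

lemma coneMeasure_eq_supportMeasure_of_subset [Nontrivial E] (hg : IsStarGauge g)
    (hν : ∀ x, g x = 1 → IsOuterNormal g x (ν x)) (hνm : Measurable ν)
    (hAm : MeasurableSet A) (hA : A ⊆ regularBoundary g) :
    coneMeasure g A = supportMeasure g ν A := by
  refine le_antisymm (ge_of_tendsto (tendsto_ofReal_pow_mul (finrank ℝ E) _) ?_)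
    (ge_of_tendsto (tendsto_ofReal_pow_mul (2 * finrank ℝ E) _) ?_)
  all_goals
    filter_upwards [self_mem_nhdsWithin] with s hs
    have hs0 : 0 < s := one_pos.trans hs
  · refine measure_le_of_locally_le (m₂ := ENNReal.ofReal s ^ finrank ℝ E • supportMeasure g ν)
      (fun x hx => ?_) hAm hA
    obtain ⟨U, hU, h⟩ := exists_isFlatPatch_of_mem_regularBoundary hg hν hx hs
    exact ⟨U, hU, fun B hB hBm => (h B hB).coneMeasure_le hg (hν x hx.1).1
      ((hν x hx.1).inner_pos hg) hs0 hνm hBm⟩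
  · refine measure_le_of_locally_le (m₂ := ENNReal.ofReal s ^ (2 * finrank ℝ E) • coneMeasure g)
      (fun x hx => ?_) hAm hA
    obtain ⟨U, hU, h⟩ := exists_isFlatPatch_of_mem_regularBoundary hg hν hx hs
    exact ⟨U, hU, fun B hB hBm => (h B hB).supportMeasure_le hg (hν x hx.1).1
      ((hν x hx.1).inner_pos hg) hs0 hBm⟩

theorem coneMeasure_eq_supportMeasure [Nontrivial E] (hg : IsStarGauge g)
    (hν : ∀ x, g x = 1 → IsOuterNormal g x (ν x)) (hνm : Measurable ν) :
    coneMeasure g = supportMeasure g ν := by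
  have hreg := measurableSet_regularBoundary hg
  ext A hA
  rw [← measure_inter_add_sdiff A hreg, ← measure_inter_add_sdiff (μ := supportMeasure g ν) A hreg,
    hg.coneMeasure_eq_supportMeasure_of_subset hν hνm (hA.inter hreg) inter_subset_right,
    measure_mono_null (sdiff_subset_compl _ _) hg.coneMeasure_compl_regularBoundary,
    measure_mono_null (sdiff_subset_compl _ _)
      (hg.supportMeasure_compl_regularBoundary finrank_pos)]

end IsStarGauge

end AreaFormula

section GaussDualVolume

/-- The radial density `s ^ (q - 1) * exp (-s² / 2)` of the weighted volume `gaussDualVolume` in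
polar coordinates. -/
noncomputable def radialDensity (q s : ℝ) : ℝ := s ^ (q - 1) * Real.exp (-s ^ 2 / 2)

/-- The primitive of `radialDensity q` vanishing at `0`: the weighted volume of a segment of length
`r` issuing from the origin. -/
noncomputable def radialPrimitive (q r : ℝ) : ℝ := ∫ s in (0 : ℝ)..r, radialDensity q s

lemma radialDensity_pos (q : ℝ) {s : ℝ} (hs : 0 < s) : 0 < radialDensity q s := by
  unfold radialDensity
  positivity

lemma continuousAt_radialDensity (q : ℝ) {s : ℝ} (hs : 0 < s) :
    ContinuousAt (radialDensity q) s := by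
  unfold radialDensity
  have := Real.continuousAt_rpow_const s (q - 1) (Or.inl hs.ne')
  fun_prop

lemma measurable_radialDensity (q : ℝ) : Measurable (radialDensity q) := by
  unfold radialDensity
  fun_prop

lemma integrableOn_radialDensity {q : ℝ} (hq : 0 < q) : IntegrableOn (radialDensity q) (Ioi 0) := by
  have hint := integrableOn_rpow_mul_exp_neg_mul_sq (b := 1 / 2) (by norm_num)
    (show -1 < q - 1 by linarith)
  refine hint.congr_fun (fun x _ => ?_) measurableSet_Ioi
  simp only [radialDensity]
  congr 2
  ring

lemma radialPrimitive_nonneg (q : ℝ) {r : ℝ} (hr : 0 ≤ r) : 0 ≤ radialPrimitive q r := by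
  rw [radialPrimitive, intervalIntegral.integral_of_le hr]
  exact setIntegral_nonneg measurableSet_Ioc fun s hs => (radialDensity_pos q hs.1).le

lemma ofReal_radialPrimitive {q : ℝ} (hq : 0 < q) {r : ℝ} (hr : 0 ≤ r) :
    ENNReal.ofReal (radialPrimitive q r) =
      ∫⁻ s in Ioc 0 r, ENNReal.ofReal (radialDensity q s) := by
  rw [radialPrimitive, intervalIntegral.integral_of_le hr, ofReal_integral_eq_lintegral_ofReal]
  · exact (integrableOn_radialDensity hq).mono_set Ioc_subset_Ioi_self
  · filter_upwards [ae_restrict_mem measurableSet_Ioc] with s hs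
    exact (radialDensity_pos q hs.1).le

lemma hasDerivAt_radialPrimitive {q : ℝ} (hq : 0 < q) {r : ℝ} (hr : 0 < r) :
    HasDerivAt (radialPrimitive q) (radialDensity q r) r := by
  refine intervalIntegral.integral_hasDerivAt_right ?_
    (measurable_radialDensity q).stronglyMeasurable.stronglyMeasurableAtFilter
    (continuousAt_radialDensity q hr)
  rw [intervalIntegrable_iff_integrableOn_Ioc_of_le hr.le]
  exact (integrableOn_radialDensity hq).mono_set Ioc_subset_Ioi_self

lemma hasDerivAt_radialPrimitive_exp {q : ℝ} (hq : 0 < q) (t : ℝ) :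
    HasDerivAt (fun t => radialPrimitive q (Real.exp t))
      (radialDensity q (Real.exp t) * Real.exp t) t :=
  (hasDerivAt_radialPrimitive hq (Real.exp_pos t)).comp t (Real.hasDerivAt_exp t)

lemma radialDensity_exp_mul_exp_le {q : ℝ} (hq : 0 < q) (t : ℝ) :
    radialDensity q (Real.exp t) * Real.exp t ≤ Real.exp (q ^ 2 / 2) := by
  rw [radialDensity, ← Real.exp_mul, ← Real.exp_add, ← Real.exp_add, Real.exp_le_exp]
  have ht : q * t ≤ q * Real.exp t := by
    gcongr
    linarith [Real.add_one_le_exp t]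
  nlinarith [sq_nonneg (Real.exp t - q)]

lemma lipschitzWith_radialPrimitive_exp {q : ℝ} (hq : 0 < q) :
    LipschitzWith (Real.exp (q ^ 2 / 2)).toNNReal fun t => radialPrimitive q (Real.exp t) := by
  refine lipschitzWith_of_nnnorm_deriv_le
    (fun t => (hasDerivAt_radialPrimitive_exp hq t).differentiableAt) fun t => ?_
  have hpos := mul_pos (radialDensity_pos q (Real.exp_pos t)) (Real.exp_pos t)
  rw [(hasDerivAt_radialPrimitive_exp hq t).deriv, ← NNReal.coe_le_coe, coe_nnnorm,
    Real.coe_toNNReal _ (Real.exp_pos _).le, Real.norm_of_nonneg hpos.le]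
  exact radialDensity_exp_mul_exp_le hq t

variable {E : Type*} [NormedAddCommGroup E] [InnerProductSpace ℝ E] [FiniteDimensional ℝ E]
  [MeasurableSpace E] [BorelSpace E] {g : E → ℝ}

/-- The measure with density `‖x‖ ^ (q - n) * exp (-‖x‖² / 2)`, where `n` is the dimension. The
`L_p` Gaussian dual curvature measures arise from the first variation of this volume. -/
noncomputable def gaussDualVolume (E : Type*) [NormedAddCommGroup E] [InnerProductSpace ℝ E]
    [FiniteDimensional ℝ E] [MeasurableSpace E] [BorelSpace E] (q : ℝ) : Measure E :=
  (volume : Measure E).withDensity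
    fun x => ENNReal.ofReal (‖x‖ ^ (q - finrank ℝ E) * Real.exp (-‖x‖ ^ 2 / 2))

lemma gaussDualVolume_absolutelyContinuous (q : ℝ) :
    gaussDualVolume E q ≪ (volume : Measure E) :=
  withDensity_absolutelyContinuous _ _

lemma gaussDualVolume_apply [Nontrivial E] (q : ℝ) {A : Set E} (hA : MeasurableSet A) :
    gaussDualVolume E q A = ∫⁻ u : sphere (0 : E) 1, ∫⁻ r in Ioi (0 : ℝ),
      ENNReal.ofReal (radialDensity q r) * A.indicator 1 (r • (u : E)) ∂volume
        ∂(volume : Measure E).toSphere := by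
  have hN : 0 < finrank ℝ E := finrank_pos
  rw [gaussDualVolume, withDensity_apply _ hA, ← lintegral_indicator hA,
    lintegral_eq_lintegral_toSphere (Measurable.indicator (by fun_prop) hA)]
  refine lintegral_congr fun u => setLIntegral_congr_fun measurableSet_Ioi fun r (hr : 0 < r) => ?_
  have hpow : r ^ (finrank ℝ E - 1) * r ^ (q - finrank ℝ E) = r ^ (q - 1) := by
    rw [← Real.rpow_natCast, ← Real.rpow_add hr, Nat.cast_pred hN]
    congr 1
    ring
  by_cases h : r • (u : E) ∈ A
  · simp only [indicator_of_mem h, Pi.one_apply, mul_one, norm_smul, norm_coe_unitSphere,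
      Real.norm_of_nonneg hr.le]
    rw [← ENNReal.ofReal_mul (by positivity), ← mul_assoc, hpow, radialDensity]
  · simp only [indicator_of_notMem h, mul_zero]

lemma isFiniteMeasure_gaussDualVolume [Nontrivial E] {q : ℝ} (hq : 0 < q) :
    IsFiniteMeasure (gaussDualVolume E q) := by
  refine ⟨?_⟩
  rw [gaussDualVolume_apply q MeasurableSet.univ]
  simp only [indicator_univ, Pi.one_apply, mul_one, lintegral_const]
  exact ENNReal.mul_lt_top (integrableOn_radialDensity hq).lintegral_lt_top (measure_lt_top _ _)

namespace IsStarGauge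

lemma gaussDualVolume_le_one [Nontrivial E] (hg : IsStarGauge g) {q : ℝ} (hq : 0 < q) :
    gaussDualVolume E q {x | g x ≤ 1} =
      ∫⁻ u : sphere (0 : E) 1, ENNReal.ofReal (radialPrimitive q (g u)⁻¹)
        ∂(volume : Measure E).toSphere := by
  rw [gaussDualVolume_apply q (measurableSet_le hg.continuous.measurable measurable_const)]
  refine lintegral_congr fun u => ?_
  have hgu := hg.pos (ne_zero_of_mem_unit_sphere u)
  have hray : EqOn (fun r => ENNReal.ofReal (radialDensity q r) *
        {x | g x ≤ 1}.indicator (1 : E → ℝ≥0∞) (r • (u : E)))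
      ((Iic (g u)⁻¹).indicator fun r => ENNReal.ofReal (radialDensity q r)) (Ioi 0) := by
    intro r (hr : 0 < r)
    have hiff : r • (u : E) ∈ {x | g x ≤ 1} ↔ r ∈ Iic (g u)⁻¹ := by
      rw [mem_ofPred_eq, hg.map_smul r hr.le, mem_Iic, ← one_div, le_div_iff₀ hgu]
    by_cases h : r ∈ Iic (g u)⁻¹
    · simp only [indicator_of_mem h, indicator_of_mem (hiff.2 h), Pi.one_apply, mul_one]
    · simp only [indicator_of_notMem h, indicator_of_notMem (mt hiff.1 h), mul_zero]
  rw [setLIntegral_congr_fun measurableSet_Ioi hray, setLIntegral_indicator measurableSet_Iic,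
    inter_comm, Ioi_inter_Iic, ofReal_radialPrimitive hq (inv_pos.2 hgu).le]

lemma ae_differentiableAt_toSphere (hg : IsStarGauge g) :
    ∀ᵐ u : sphere (0 : E) 1 ∂(volume : Measure E).toSphere, DifferentiableAt ℝ g u := by
  have hm : MeasurableSet {u : sphere (0 : E) 1 | ¬ DifferentiableAt ℝ g u} :=
    measurable_subtype_coe (measurableSet_of_differentiableAt ℝ g).compl
  rw [ae_iff, Measure.toSphere_apply' _ hm, hg.volume_Ioo_smul_of_not_differentiableAt, mul_zero]
  rintro _ ⟨u, hu, rfl⟩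
  exact hu

end IsStarGauge

end GaussDualVolume

section WulffShape

variable {E : Type*} [NormedAddCommGroup E] [InnerProductSpace ℝ E]

lemma exists_norm_smul_unitSphere {x : E} (hx : x ≠ 0) :
    ∃ v : sphere (0 : E) 1, ‖x‖ • (v : E) = x := by
  have h : ‖x‖ ≠ 0 := norm_ne_zero_iff.2 hx
  refine ⟨⟨‖x‖⁻¹ • x, by simp [norm_smul, h]⟩, ?_⟩
  simp [smul_smul, h]

lemma inner_unitSphere_le_norm (x : E) (v : sphere (0 : E) 1) : ⟪x, (v : E)⟫ ≤ ‖x‖ := by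
  simpa only [norm_coe_unitSphere, mul_one] using real_inner_le_norm x (v : E)

/-- The Wulff shape of `h`: the intersection of the half-spaces with outer unit normal `v` at
(signed) distance `h v` from the origin. -/
def wulffShape (h : sphere (0 : E) 1 → ℝ) : Set E :=
  {x | ∀ v : sphere (0 : E) 1, ⟪x, (v : E)⟫ ≤ h v}

variable {h k : sphere (0 : E) 1 → ℝ} {K : Set E}

lemma isClosed_wulffShape (h : sphere (0 : E) 1 → ℝ) : IsClosed (wulffShape h) := by
  simp only [wulffShape, ofPred_forall]
  exact isClosed_iInter fun v => isClosed_le (by fun_prop) continuous_const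

lemma wulffShape_mono (hhk : ∀ v, h v ≤ k v) : wulffShape h ⊆ wulffShape k :=
  fun _ hx v => (hx v).trans (hhk v)

lemma wulffShape_subset_closedBall {R : ℝ} (hR : 0 ≤ R) (hh : ∀ v, h v ≤ R) :
    wulffShape h ⊆ closedBall 0 R := by
  intro x hx
  rw [mem_closedBall_zero_iff]
  rcases eq_or_ne x 0 with rfl | h0
  · rwa [norm_zero]
  · obtain ⟨v, hv⟩ := exists_norm_smul_unitSphere h0
    calc ‖x‖ = ⟪‖x‖ • (v : E), (v : E)⟫ := by
          rw [real_inner_smul_left, real_inner_self_eq_norm_sq, norm_coe_unitSphere]; ring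
      _ ≤ R := by rw [hv]; exact (hx v).trans (hh v)

lemma closedBall_subset_wulffShape {r : ℝ} (hr : ∀ v, r ≤ h v) :
    closedBall 0 r ⊆ wulffShape h :=
  fun x hx v => (inner_unitSphere_le_norm x v).trans ((mem_closedBall_zero_iff.1 hx).trans (hr v))

lemma zero_mem_wulffShape (hh : ∀ v, 0 ≤ h v) : (0 : E) ∈ wulffShape h :=
  fun v => by rw [inner_zero_left]; exact hh v

lemma abs_inner_le_of_mem_wulffShape (he : ∀ v, h (-v) = h v) {x : E} (hx : x ∈ wulffShape h)
    (v : sphere (0 : E) 1) : |⟪x, (v : E)⟫| ≤ h v := by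
  have hneg := hx (-v)
  rw [he, coe_neg_sphere, inner_neg_right] at hneg
  exact abs_le.2 ⟨by linarith, hx v⟩

lemma neg_mem_wulffShape (he : ∀ v, h (-v) = h v) {x : E} (hx : x ∈ wulffShape h) :
    -x ∈ wulffShape h := by
  intro v
  rw [inner_neg_left]
  exact (neg_le_abs _).trans (abs_inner_le_of_mem_wulffShape he hx v)

lemma iInter_wulffShape_add_one_div (h : sphere (0 : E) 1 → ℝ) :
    ⋂ k : ℕ, wulffShape (fun v => h v + 1 / ((k : ℝ) + 1)) = wulffShape h := by
  ext x
  rw [mem_iInter]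
  refine ⟨fun hx v => ?_, fun hx k => wulffShape_mono (fun v => ?_) hx⟩
  · have hlim : Tendsto (fun k : ℕ => h v + 1 / ((k : ℝ) + 1)) atTop (𝓝 (h v + 0)) :=
      tendsto_const_nhds.add tendsto_one_div_add_atTop_nhds_zero_nat
    rw [add_zero] at hlim
    exact ge_of_tendsto' hlim fun k => hx k v
  · exact le_add_of_nonneg_right (by positivity)

/-- The support function of a set `K`, with junk value `0` in the directions in which `K` is
unbounded. -/
noncomputable def supportFun (K : Set E) (v : E) : ℝ := sSup ((fun x => ⟪x, v⟫) '' K)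

lemma exists_inner_eq_supportFun (hK : IsCompact K) (hne : K.Nonempty) (v : E) :
    ∃ x ∈ K, ⟪x, v⟫ = supportFun K v := by
  obtain ⟨x, hx, h⟩ := hK.exists_sSup_image_eq hne (f := fun x => ⟪x, v⟫) (by fun_prop)
  exact ⟨x, hx, h.symm⟩

lemma inner_le_supportFun (hK : IsCompact K) {x : E} (hx : x ∈ K) (v : E) :
    ⟪x, v⟫ ≤ supportFun K v :=
  le_csSup (hK.image (by fun_prop)).bddAbove (mem_image_of_mem _ hx)

lemma lipschitzWith_supportFun {R : NNReal} (hK : IsCompact K) (hne : K.Nonempty)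
    (hR : K ⊆ closedBall 0 R) : LipschitzWith R (supportFun K) := by
  refine LipschitzWith.of_le_add_mul R fun u v => ?_
  obtain ⟨x, hx, hxu⟩ := exists_inner_eq_supportFun hK hne u
  calc supportFun K u = ⟪x, v⟫ + ⟪x, u - v⟫ := by rw [← hxu, inner_sub_right]; ring
    _ ≤ supportFun K v + R * dist u v := by
        rw [dist_eq_norm]
        have hxR := mem_closedBall_zero_iff.1 (hR hx)
        gcongr
        · exact inner_le_supportFun hK hx v
        · exact (real_inner_le_norm _ _).trans (by gcongr)

lemma supportFun_neg (hK : IsCompact K) (hne : K.Nonempty) (hsymm : ∀ x ∈ K, -x ∈ K) (v : E) :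
    supportFun K (-v) = supportFun K v := by
  have hle (v : E) : supportFun K (-v) ≤ supportFun K v := by
    obtain ⟨x, hx, hxv⟩ := exists_inner_eq_supportFun hK hne (-v)
    rw [← hxv, inner_neg_right, ← inner_neg_left]
    exact inner_le_supportFun hK (hsymm x hx) v
  exact le_antisymm (hle v) (by simpa only [neg_neg] using hle (-v))

lemma supportFun_wulffShape_le (hK : IsCompact (wulffShape h)) (hne : (wulffShape h).Nonempty)
    (v : sphere (0 : E) 1) : supportFun (wulffShape h) v ≤ h v := by
  obtain ⟨x, hx, hxv⟩ := exists_inner_eq_supportFun hK hne v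
  exact hxv ▸ hx v

lemma wulffShape_supportFun_wulffShape (hK : IsCompact (wulffShape h))
    (hne : (wulffShape h).Nonempty) :
    wulffShape (fun v => supportFun (wulffShape h) v) = wulffShape h :=
  (wulffShape_mono (supportFun_wulffShape_le hK hne)).antisymm
    fun _ hx v => inner_le_supportFun hK hx v

end WulffShape

section Maximiser

open scoped BoundedContinuousFunction

section IntegralRpow

variable {X : Type*} [TopologicalSpace X] [MeasurableSpace X] [OpensMeasurableSpace X]
  {m : Measure X} [IsFiniteMeasure m] {p : ℝ}

lemma integrable_rpow [CompactSpace X] {h : X → ℝ} (hp : 0 ≤ p) (hh : Continuous h) :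
    Integrable (fun v => h v ^ p) m :=
  ((Real.continuous_rpow_const hp).comp hh).integrable_of_hasCompactSupport
    (HasCompactSupport.of_compactSpace _)

lemma continuous_integral_rpow (hp : 0 ≤ p) :
    Continuous fun h : X →ᵇ ℝ => ∫ v, h v ^ p ∂m := by
  have hrpow := Real.continuous_rpow_const hp
  refine continuous_iff_continuousAt.2 fun h => continuousAt_of_dominated
    (bound := fun _ => (‖h‖ + 1) ^ p) ?_ ?_ (integrable_const _) ?_
  · exact .of_forall fun k => (hrpow.comp k.continuous).aestronglyMeasurable
  · filter_upwards [ball_mem_nhds h one_pos] with k hk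
    refine .of_forall fun v => (Real.abs_rpow_le_abs_rpow _ _).trans ?_
    gcongr
    rw [mem_ball, dist_eq_norm] at hk
    linarith [k.norm_coe_le_norm v, norm_le_norm_add_norm_sub' k h, Real.norm_eq_abs (k v)]
  · exact .of_forall fun v => (hrpow.comp (continuous_eval_const v)).continuousAt

end IntegralRpow

variable {E : Type*} [NormedAddCommGroup E] [InnerProductSpace ℝ E]

/-- The competitors in the variational problem: the even positive continuous functions on the
sphere. -/
structure IsAdmissible (h : sphere (0 : E) 1 → ℝ) : Prop where
  continuous : Continuous h
  pos : ∀ v, 0 < h v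
  even : ∀ v, h (-v) = h v

/-- The compact class in which a maximiser is found: the even `R`-Lipschitz functions with values
in `[0, R]`, among them the support functions of the symmetric convex bodies in the ball of
radius `R`. -/
def boundedSupportClass (E : Type*) [NormedAddCommGroup E] (R : NNReal) :
    Set (sphere (0 : E) 1 →ᵇ ℝ) :=
  {h | (∀ u, h u ∈ Icc 0 (R : ℝ)) ∧ LipschitzWith R h ∧ ∀ u, h (-u) = h u}

lemma isCompact_boundedSupportClass [FiniteDimensional ℝ E] (R : NNReal) :
    IsCompact (boundedSupportClass E R) := by
  have heval (u : sphere (0 : E) 1) : Continuous fun h : sphere (0 : E) 1 →ᵇ ℝ => h u :=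
    continuous_eval_const u
  refine BoundedContinuousFunction.arzela_ascoli₂ (Icc 0 (R : ℝ)) isCompact_Icc _ ?_
    (fun h u hh => hh.1 u) ?_
  · simp only [boundedSupportClass, lipschitzWith_iff_dist_le_mul, ofPred_and, ofPred_forall]
    refine .inter (isClosed_iInter fun u => isClosed_Icc.preimage (heval u)) (.inter ?_ ?_)
    · exact isClosed_iInter fun u => isClosed_iInter fun v =>
        isClosed_le ((heval u).dist (heval v)) continuous_const
    · exact isClosed_iInter fun u => isClosed_eq (heval (-u)) (heval u)
  · have hlim : Tendsto (fun t : ℝ => R * t) (𝓝 0) (𝓝 0) := by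
      simpa only [mul_zero] using (continuous_const_mul (R : ℝ)).tendsto 0
    exact equicontinuous_of_continuity_modulus _ hlim _ fun u v h => h.2.2.1.dist_le_mul u v

lemma exists_mem_boundedSupportClass_eq_supportFun [FiniteDimensional ℝ E]
    {h : sphere (0 : E) 1 → ℝ} {R : NNReal} (h0 : ∀ v, 0 ≤ h v) (he : ∀ v, h (-v) = h v)
    (hR : wulffShape h ⊆ closedBall 0 R) :
    ∃ s ∈ boundedSupportClass E R,
      ⇑s = fun v : sphere (0 : E) 1 => supportFun (wulffShape h) v := by
  have hK : IsCompact (wulffShape h) :=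
    (isCompact_closedBall 0 (R : ℝ)).of_isClosed_subset (isClosed_wulffShape h) hR
  have h0K := zero_mem_wulffShape h0
  have hlip : LipschitzWith R fun v : sphere (0 : E) 1 => supportFun (wulffShape h) v := by
    simpa only [mul_one, Function.comp_def] using
      (lipschitzWith_supportFun hK ⟨0, h0K⟩ hR).comp (LipschitzWith.subtype_val _)
  refine ⟨BoundedContinuousFunction.mkOfCompact ⟨_, hlip.continuous⟩,
    ⟨fun u => ⟨?_, ?_⟩, hlip, fun u => ?_⟩, rfl⟩
  · exact (inner_zero_left (u : E)).symm.trans_le (inner_le_supportFun hK h0K u)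
  · obtain ⟨x, hx, hxu⟩ := exists_inner_eq_supportFun hK ⟨0, h0K⟩ (u : E)
    exact hxu.symm.trans_le
      ((inner_unitSphere_le_norm x u).trans (mem_closedBall_zero_iff.1 (hR hx)))
  · exact supportFun_neg hK ⟨0, h0K⟩ (fun x hx => neg_mem_wulffShape he hx) u

variable [MeasurableSpace E]

/-- The functional whose maximiser among admissible functions solves the Minkowski problem: the
volume of the Wulff shape, penalised with multiplier `l`. -/
noncomputable def wulffFunctional (W : Measure E) (m : Measure (sphere (0 : E) 1)) (p l : ℝ)
    (h : sphere (0 : E) 1 → ℝ) : ℝ :=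
  W.real (wulffShape h) - l * ∫ v, h v ^ p ∂m

variable {W : Measure E} {m : Measure (sphere (0 : E) 1)} {p l : ℝ} {h : sphere (0 : E) 1 → ℝ}

lemma wulffFunctional_one_pos [IsFiniteMeasure W]
    (hlW : l * m.real univ < W.real (closedBall 0 1)) :
    0 < wulffFunctional W m p l fun _ => 1 := by
  rw [wulffFunctional, sub_pos]
  simp only [Real.one_rpow, integral_const, smul_eq_mul, mul_one]
  exact hlW.trans_le (measureReal_mono (closedBall_subset_wulffShape fun _ => le_rfl))

lemma measure_wulffShape_ne_zero_of_wulffFunctional_pos (hl : 0 ≤ l) (h0 : ∀ v, 0 ≤ h v)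
    (hpos : 0 < wulffFunctional W m p l h) : W (wulffShape h) ≠ 0 := by
  intro hW
  have hint : 0 ≤ ∫ v, h v ^ p ∂m := integral_nonneg fun v => Real.rpow_nonneg (h0 v) p
  rw [wulffFunctional, measureReal_def, hW, ENNReal.toReal_zero] at hpos
  linarith [mul_nonneg hl hint]

variable [BorelSpace E]

lemma upperSemicontinuous_measureReal_wulffShape [IsFiniteMeasure W] :
    UpperSemicontinuous fun h : sphere (0 : E) 1 →ᵇ ℝ => W.real (wulffShape h) := by
  intro h y hy
  have hlim : Tendsto (fun k : ℕ => W.real (wulffShape fun v => h v + 1 / ((k : ℝ) + 1))) atTop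
      (𝓝 (W.real (wulffShape h))) := by
    rw [← iInter_wulffShape_add_one_div h]
    refine (ENNReal.tendsto_toReal (measure_ne_top _ _)).comp (tendsto_measure_iInter_atTop
      (fun k => (isClosed_wulffShape _).nullMeasurableSet) (fun i j hij => ?_)
      ⟨0, measure_ne_top _ _⟩)
    refine wulffShape_mono fun v => ?_
    gcongr
  obtain ⟨k, hk⟩ := (hlim.eventually (gt_mem_nhds hy)).exists
  filter_upwards [ball_mem_nhds h (show (0 : ℝ) < 1 / ((k : ℝ) + 1) by positivity)] with h' hh'
  refine (measureReal_mono (wulffShape_mono fun v => ?_)).trans_lt hk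
  have hdist := (BoundedContinuousFunction.dist_coe_le_dist v).trans_lt (mem_ball.1 hh')
  rw [Real.dist_eq] at hdist
  linarith [le_abs_self (h' v - h v)]

lemma upperSemicontinuous_wulffFunctional [IsFiniteMeasure W] [IsFiniteMeasure m] (hp : 0 ≤ p) :
    UpperSemicontinuous fun h : sphere (0 : E) 1 →ᵇ ℝ => wulffFunctional W m p l h := by
  simp only [wulffFunctional, sub_eq_add_neg]
  exact upperSemicontinuous_measureReal_wulffShape.add
    ((continuous_integral_rpow hp).const_mul l).neg.upperSemicontinuous

variable [FiniteDimensional ℝ E]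

lemma exists_le_integral_abs_inner_rpow [Nontrivial E] [IsFiniteMeasure m]
    (hm : ∀ v : sphere (0 : E) 1, m {u | ⟪(v : E), (u : E)⟫ ≠ 0} ≠ 0) (hp : 0 ≤ p) :
    ∃ c, 0 < c ∧ ∀ v : sphere (0 : E) 1,
      c ≤ ∫ u : sphere (0 : E) 1, |⟪(v : E), (u : E)⟫| ^ p ∂m := by
  have hrpow := Real.continuous_rpow_const hp
  have hcont : Continuous fun v : sphere (0 : E) 1 =>
      ∫ u : sphere (0 : E) 1, |⟪(v : E), (u : E)⟫| ^ p ∂m := by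
    refine continuous_of_dominated (bound := fun _ => 1) (fun v => ?_)
      (fun v => .of_forall fun u => ?_) (integrable_const _) (.of_forall fun u => ?_)
    · exact (hrpow.comp (by fun_prop : Continuous fun u : sphere (0 : E) 1 =>
        |⟪(v : E), (u : E)⟫|)).aestronglyMeasurable
    · rw [Real.norm_of_nonneg (by positivity)]
      refine Real.rpow_le_one (abs_nonneg _) ?_ hp
      simpa only [norm_coe_unitSphere, mul_one] using abs_real_inner_le_norm (v : E) (u : E)
    · exact hrpow.comp (by fun_prop : Continuous fun v : sphere (0 : E) 1 => |⟪(v : E), (u : E)⟫|)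
  have : Nonempty (sphere (0 : E) 1) := (NormedSpace.sphere_nonempty.2 zero_le_one).to_subtype
  obtain ⟨v₀, -, hv₀⟩ := isCompact_univ.exists_isMinOn
    univ_nonempty hcont.continuousOn
  refine ⟨_, ?_, fun v => hv₀ (mem_univ v)⟩
  rw [integral_pos_iff_support_of_nonneg (fun u => by positivity)
    (integrable_rpow hp (by fun_prop))]
  refine (pos_iff_ne_zero.2 (hm v₀)).trans_le (measure_mono fun u (hu : _ ≠ 0) => ?_)
  have := abs_pos.2 hu
  rw [Function.mem_support]
  positivity

lemma mul_norm_rpow_le_integral_rpow [IsFiniteMeasure m] (hp : 0 < p) {c : ℝ}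
    (hc : ∀ v : sphere (0 : E) 1, c ≤ ∫ u : sphere (0 : E) 1, |⟪(v : E), (u : E)⟫| ^ p ∂m)
    (hh : Continuous h) (he : ∀ v, h (-v) = h v) {x : E} (hx : x ∈ wulffShape h) (hx0 : x ≠ 0) :
    c * ‖x‖ ^ p ≤ ∫ v, h v ^ p ∂m := by
  obtain ⟨v, hv⟩ := exists_norm_smul_unitSphere hx0
  calc c * ‖x‖ ^ p ≤ (∫ u : sphere (0 : E) 1, |⟪(v : E), (u : E)⟫| ^ p ∂m) * ‖x‖ ^ p := by
        gcongr
        exact hc v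
    _ = ∫ u : sphere (0 : E) 1, |⟪x, (u : E)⟫| ^ p ∂m := by
        rw [← integral_mul_const]
        congr with u
        rw [← hv, real_inner_smul_left, abs_mul, abs_norm, hv,
          Real.mul_rpow (norm_nonneg _) (abs_nonneg _), mul_comm]
    _ ≤ ∫ u, h u ^ p ∂m := by
        refine integral_mono (integrable_rpow hp.le (by fun_prop)) (integrable_rpow hp.le hh)
          fun u => ?_
        exact Real.rpow_le_rpow (abs_nonneg _) (abs_inner_le_of_mem_wulffShape he hx u) hp.le

lemma wulffShape_subset_closedBall_of_wulffFunctional_pos [IsFiniteMeasure W] [IsFiniteMeasure m]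
    (hp : 0 < p) (hl : 0 ≤ l) {c : ℝ} (hc0 : 0 ≤ c)
    (hc : ∀ v : sphere (0 : E) 1, c ≤ ∫ u : sphere (0 : E) 1, |⟪(v : E), (u : E)⟫| ^ p ∂m)
    {R : ℝ} (hR : 0 ≤ R) (hcR : W.real univ ≤ l * (c * R ^ p)) (hh : Continuous h)
    (he : ∀ v, h (-v) = h v) (hpos : 0 < wulffFunctional W m p l h) :
    wulffShape h ⊆ closedBall 0 R := by
  intro x hx
  rw [mem_closedBall_zero_iff]
  by_contra! hxR
  have hx0 : x ≠ 0 := norm_pos_iff.1 (hR.trans_lt hxR)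
  refine hpos.not_ge (sub_nonpos.2 ?_)
  calc W.real (wulffShape h) ≤ W.real univ := measureReal_mono (subset_univ _)
    _ ≤ l * (c * ‖x‖ ^ p) := hcR.trans (by gcongr)
    _ ≤ l * ∫ v, h v ^ p ∂m := by
        gcongr
        exact mul_norm_rpow_le_integral_rpow hp hc hh he hx hx0

lemma wulffFunctional_le_wulffFunctional_supportFun [IsFiniteMeasure m] (hp : 0 ≤ p) (hl : 0 ≤ l)
    (hh : Continuous h) (h0 : ∀ v, 0 ≤ h v) (hK : IsCompact (wulffShape h)) :
    wulffFunctional W m p l h ≤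
      wulffFunctional W m p l fun v : sphere (0 : E) 1 => supportFun (wulffShape h) v := by
  have h0K := zero_mem_wulffShape h0
  obtain ⟨R, hR⟩ := hK.isBounded.subset_closedBall 0
  have hlip := lipschitzWith_supportFun hK ⟨0, h0K⟩ (R := R.toNNReal)
    (hR.trans (closedBall_subset_closedBall (Real.le_coe_toNNReal R)))
  rw [wulffFunctional, wulffFunctional, wulffShape_supportFun_wulffShape hK ⟨0, h0K⟩]
  refine sub_le_sub_left (mul_le_mul_of_nonneg_left ?_ hl) _
  refine integral_mono (integrable_rpow hp (hlip.continuous.comp continuous_subtype_val))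
    (integrable_rpow hp hh) fun v => ?_
  refine Real.rpow_le_rpow ?_ (supportFun_wulffShape_le hK ⟨0, h0K⟩ v) hp
  simpa only [inner_zero_left] using inner_le_supportFun hK h0K (v : E)

lemma pos_of_measure_wulffShape_ne_zero (hW : W ≪ volume) (hne : W (wulffShape h) ≠ 0)
    (he : ∀ v, h (-v) = h v) (v : sphere (0 : E) 1) : 0 < h v := by
  by_contra! hv
  refine hne (hW (measure_mono_null (t := ((ℝ ∙ (v : E))ᗮ : Submodule ℝ E)) (fun x hx => ?_)
    (Measure.addHaar_submodule _ _ fun htop => ?_)))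
  · rw [SetLike.mem_coe, Submodule.mem_orthogonal_singleton_iff_inner_left]
    exact abs_nonpos_iff.1 ((abs_inner_le_of_mem_wulffShape he hx v).trans hv)
  · have hvmem : (v : E) ∈ (ℝ ∙ (v : E))ᗮ := htop ▸ Submodule.mem_top
    rw [Submodule.mem_orthogonal_singleton_iff_inner_left, inner_self_eq_zero] at hvmem
    exact ne_zero_of_mem_unit_sphere v hvmem

lemma exists_mem_boundedSupportClass_forall_wulffFunctional_le [IsFiniteMeasure W]
    [IsFiniteMeasure m] (hp : 0 < p) (hl : 0 ≤ l)
    (hlW : l * m.real univ < W.real (closedBall 0 1)) {c : ℝ} (hc0 : 0 ≤ c)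
    (hc : ∀ v : sphere (0 : E) 1, c ≤ ∫ u : sphere (0 : E) 1, |⟪(v : E), (u : E)⟫| ^ p ∂m)
    {R : NNReal} (hR : 1 ≤ R) (hcR : W.real univ ≤ l * (c * (R : ℝ) ^ p)) :
    ∃ h ∈ boundedSupportClass E R, 0 < wulffFunctional W m p l h ∧
      IsMaxOn (wulffFunctional W m p l) {k | IsAdmissible k} h := by
  have hone : BoundedContinuousFunction.const (sphere (0 : E) 1) (1 : ℝ) ∈
      boundedSupportClass E R :=
    ⟨fun _ => ⟨zero_le_one, mod_cast hR⟩, (LipschitzWith.const 1).weaken zero_le, fun _ => rfl⟩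
  obtain ⟨h, hmem, hmax⟩ := (upperSemicontinuous_wulffFunctional (W := W) (m := m) (l := l)
    hp.le).upperSemicontinuousOn _ |>.exists_isMaxOn ⟨_, hone⟩ (isCompact_boundedSupportClass R)
  have hpos : 0 < wulffFunctional W m p l h := (wulffFunctional_one_pos hlW).trans_le (hmax hone)
  refine ⟨h, hmem, hpos, fun k hk => ?_⟩
  rcases le_or_gt (wulffFunctional W m p l k) 0 with hk0 | hk0
  · exact hk0.trans hpos.le
  · have hkR := wulffShape_subset_closedBall_of_wulffFunctional_pos hp hl hc0 hc R.2 hcR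
      hk.continuous hk.even hk0
    have hK : IsCompact (wulffShape k) :=
      (isCompact_closedBall 0 (R : ℝ)).of_isClosed_subset (isClosed_wulffShape k) hkR
    obtain ⟨s, hs, hsk⟩ :=
      exists_mem_boundedSupportClass_eq_supportFun (fun v => (hk.pos v).le) hk.even hkR
    refine (wulffFunctional_le_wulffFunctional_supportFun hp.le hl hk.continuous
      (fun v => (hk.pos v).le) hK).trans ?_
    rw [← hsk]
    exact hmax hs

theorem exists_isMaxOn_wulffFunctional [Nontrivial E] [IsFiniteMeasure W] (hW : W ≪ volume)
    (hW1 : W (closedBall 0 1) ≠ 0) [IsFiniteMeasure m]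
    (hm : ∀ v : sphere (0 : E) 1, m {u | ⟪(v : E), (u : E)⟫ ≠ 0} ≠ 0) (hp : 0 < p) :
    ∃ l h, 0 < l ∧ IsAdmissible h ∧
      (∀ v : sphere (0 : E) 1, ∃ x ∈ wulffShape h, ⟪x, (v : E)⟫ = h v) ∧
      IsMaxOn (wulffFunctional W m p l) {k | IsAdmissible k} h := by
  obtain ⟨l, hl, hlW⟩ : ∃ l, 0 < l ∧ l * m.real univ < W.real (closedBall 0 1) := by
    have hw : 0 < W.real (closedBall 0 1) := ENNReal.toReal_pos hW1 (measure_ne_top _ _)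
    refine ⟨W.real (closedBall 0 1) / (m.real univ + 1), by positivity, ?_⟩
    rw [div_mul_eq_mul_div, div_lt_iff₀ (by positivity)]
    linarith
  obtain ⟨c, hc0, hc⟩ := exists_le_integral_abs_inner_rpow hm hp.le
  obtain ⟨R, hR, hcR⟩ : ∃ R : NNReal, 1 ≤ R ∧ W.real univ ≤ l * (c * (R : ℝ) ^ p) := by
    obtain ⟨R, hcR, hR⟩ := ((tendsto_rpow_atTop hp).eventually_ge_atTop
      (W.real univ / (l * c))).and (eventually_ge_atTop 1) |>.exists
    rw [div_le_iff₀ (by positivity)] at hcR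
    lift R to NNReal using zero_le_one.trans hR
    exact ⟨R, mod_cast hR, hcR.trans_eq (by ring)⟩
  obtain ⟨h, ⟨hIcc, -, he⟩, hpos, hmax⟩ :=
    exists_mem_boundedSupportClass_forall_wulffFunctional_le hp hl.le hlW hc0.le hc hR hcR
  have h0 (v) := (hIcc v).1
  have hsub := wulffShape_subset_closedBall R.2 fun v => (hIcc v).2
  have hK : IsCompact (wulffShape h) :=
    (isCompact_closedBall 0 (R : ℝ)).of_isClosed_subset (isClosed_wulffShape h) hsub
  have hne : (wulffShape h).Nonempty := ⟨0, zero_mem_wulffShape h0⟩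
  obtain ⟨s, ⟨-, -, hse⟩, hs⟩ := exists_mem_boundedSupportClass_eq_supportFun h0 he hsub
  have hws : wulffShape s = wulffShape h := hs ▸ wulffShape_supportFun_wulffShape hK hne
  have hle : wulffFunctional W m p l h ≤ wulffFunctional W m p l s :=
    hs ▸ wulffFunctional_le_wulffFunctional_supportFun hp.le hl.le h.continuous h0 hK
  have hWs : W (wulffShape s) ≠ 0 :=
    hws ▸ measure_wulffShape_ne_zero_of_wulffFunctional_pos hl.le h0 hpos
  refine ⟨l, s, hl, ⟨s.continuous, pos_of_measure_wulffShape_ne_zero hW hWs hse, hse⟩, fun v => ?_,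
    fun k hk => (hmax hk).trans hle⟩
  rw [hws, hs]
  exact exists_inner_eq_supportFun hK hne v

end Maximiser

section ParametricDerivatives

variable {X : Type*} [TopologicalSpace X] {F F' : ℝ → X → ℝ} {t₀ : ℝ} {x₀ : X}

lemma eventually_abs_sub_sub_mul_le (hF' : Continuous fun z : ℝ × X => F' z.1 z.2)
    (hd : ∀ t x, HasDerivAt (F · x) (F' t x) t) (t₀ : ℝ) (x₀ : X) {ε : ℝ} (hε : 0 < ε) :
    ∀ᶠ z : ℝ × X in 𝓝 (t₀, x₀),
      |F z.1 z.2 - F t₀ z.2 - (z.1 - t₀) * F' t₀ x₀| ≤ ε * |z.1 - t₀| := by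
  have hclose : {z : ℝ × X | |F' z.1 z.2 - F' t₀ x₀| < ε} ∈ 𝓝 (t₀, x₀) :=
    (by fun_prop : Continuous fun z : ℝ × X => |F' z.1 z.2 - F' t₀ x₀|).continuousAt.eventually
      (gt_mem_nhds (by simpa using hε))
  obtain ⟨T, hT, U, hU, hTU⟩ := mem_nhds_prod_iff.1 hclose
  obtain ⟨δ, hδ, hball⟩ := Metric.mem_nhds_iff.1 hT
  filter_upwards [prod_mem_nhds (ball_mem_nhds t₀ hδ) hU] with ⟨t, x⟩ ⟨ht, hx⟩
  have hderiv (s : ℝ) : HasDerivAt (fun s => F s x - s * F' t₀ x₀) (F' s x - F' t₀ x₀) s := by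
    simpa only [one_mul] using (hd s x).fun_sub ((hasDerivAt_id' s).mul_const (F' t₀ x₀))
  have hmvt := (convex_ball t₀ δ).norm_image_sub_le_of_norm_hasDerivWithin_le
    (fun s _ => (hderiv s).hasDerivWithinAt) (fun s hs => (hTU (mk_mem_prod (hball hs) hx)).le)
    (mem_ball_self hδ) ht
  rw [Real.norm_eq_abs, Real.norm_eq_abs] at hmvt
  convert hmvt using 2
  ring

variable [CompactSpace X]

-- Danskin's theorem: for `t` near `t₀` every maximiser of `F t` is close to `x₀`.
lemma hasDerivAt_iSup_of_unique_max (hF : Continuous fun z : ℝ × X => F z.1 z.2)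
    (hF' : Continuous fun z : ℝ × X => F' z.1 z.2) (hd : ∀ t x, HasDerivAt (F · x) (F' t x) t)
    (hmax : ∀ x, x ≠ x₀ → F t₀ x < F t₀ x₀) :
    HasDerivAt (fun t => ⨆ x, F t x) (F' t₀ x₀) t₀ := by
  have hcont (t : ℝ) : Continuous (F t) := hF.comp (by fun_prop : Continuous fun x => (t, x))
  have hle (t : ℝ) (x : X) : F t x ≤ ⨆ x, F t x :=
    le_ciSup (isCompact_range (hcont t)).bddAbove x
  have : Nonempty X := ⟨x₀⟩
  have hsup₀ : ⨆ x, F t₀ x = F t₀ x₀ := by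
    refine le_antisymm (ciSup_le fun x => ?_) (hle t₀ x₀)
    rcases eq_or_ne x x₀ with rfl | hx
    · exact le_rfl
    · exact (hmax x hx).le
  rw [hasDerivAt_iff_isLittleO, Asymptotics.isLittleO_iff]
  intro ε hε
  have hev : ∀ᶠ t in 𝓝 t₀, ∀ x ∈ (univ : Set X),
      F t x < F t x₀ ∨ |F t x - F t₀ x - (t - t₀) * F' t₀ x₀| ≤ ε * |t - t₀| := by
    refine isCompact_univ.eventually_forall_of_forall_eventually fun x _ => ?_
    rcases eq_or_ne x x₀ with rfl | hx
    · exact (eventually_abs_sub_sub_mul_le hF' hd t₀ x hε).mono fun _ => Or.inr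
    · have hx₀ : Continuous fun z : ℝ × X => F z.1 x₀ :=
        hF.comp (by fun_prop : Continuous fun z : ℝ × X => (z.1, x₀))
      exact (hF.continuousAt.eventually_lt hx₀.continuousAt (hmax x hx)).mono fun _ => Or.inl
  filter_upwards [hev] with t ht
  have hlower := abs_le.1 ((ht x₀ (mem_univ _)).resolve_left (lt_irrefl _))
  obtain ⟨x, -, hx⟩ := isCompact_univ.exists_isMaxOn univ_nonempty (hcont t).continuousOn
  have hsup : ⨆ y, F t y = F t x := le_antisymm (ciSup_le fun y => hx (mem_univ y)) (hle t x)
  have hx₀ : F t x₀ ≤ F t x := hx (mem_univ x₀)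
  have hupper := abs_le.1 ((ht x (mem_univ _)).resolve_left hx₀.not_gt)
  have hx_le : F t₀ x ≤ F t₀ x₀ := hsup₀ ▸ hle t₀ x
  rw [hsup, hsup₀, smul_eq_mul, Real.norm_eq_abs, Real.norm_eq_abs]
  exact abs_le.2 ⟨by linarith, by linarith⟩

lemma hasDerivAt_integral_of_continuous [MeasurableSpace X] [OpensMeasurableSpace X]
    (m : Measure X) [IsFiniteMeasure m] (hF : ∀ t, Continuous (F t))
    (hF' : Continuous fun z : ℝ × X => F' z.1 z.2)
    (hd : ∀ t x, HasDerivAt (F · x) (F' t x) t) (t₀ : ℝ) :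
    HasDerivAt (fun t => ∫ x, F t x ∂m) (∫ x, F' t₀ x ∂m) t₀ := by
  obtain ⟨B, hB⟩ := ((isCompact_closedBall t₀ 1).prod
    (isCompact_univ (X := X))).exists_bound_of_continuousOn hF'.continuousOn
  have hF'₀ : Continuous (F' t₀) := hF'.comp (by fun_prop : Continuous fun x => (t₀, x))
  refine (hasDerivAt_integral_of_dominated_loc_of_deriv_le (bound := fun _ => B)
    (closedBall_mem_nhds t₀ one_pos) (.of_forall fun t => (hF t).aestronglyMeasurable)
    ((hF t₀).integrable_of_hasCompactSupport (HasCompactSupport.of_compactSpace _))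
    hF'₀.aestronglyMeasurable ?_ (integrable_const _) ?_).2
  · exact .of_forall fun x t ht => hB (t, x) ⟨ht, mem_univ x⟩
  · exact .of_forall fun x t _ => hd t x

end ParametricDerivatives

section WulffGauge

variable {E : Type*} [NormedAddCommGroup E] [InnerProductSpace ℝ E]
  {h k : sphere (0 : E) 1 → ℝ} {x : E}

/-- The gauge function of the Wulff shape of a positive function `h`. -/
noncomputable def wulffGauge (h : sphere (0 : E) 1 → ℝ) (x : E) : ℝ :=
  ⨆ v : sphere (0 : E) 1, ⟪x, (v : E)⟫ / h v

lemma wulffGauge_neg (he : ∀ v, h (-v) = h v) (x : E) : wulffGauge h (-x) = wulffGauge h x := by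
  refine Function.Surjective.iSup_congr (fun v : sphere (0 : E) 1 => -v) neg_surjective fun v => ?_
  rw [he, coe_neg_sphere, inner_neg_right, inner_neg_left]

variable [FiniteDimensional ℝ E]

lemma inner_le_wulffGauge_mul (hc : Continuous h) (hpos : ∀ v, 0 < h v) (x : E)
    (v : sphere (0 : E) 1) : ⟪x, (v : E)⟫ ≤ wulffGauge h x * h v := by
  have hbdd : BddAbove (range fun v : sphere (0 : E) 1 => ⟪x, (v : E)⟫ / h v) :=
    (isCompact_range (.div (by fun_prop) hc fun v => (hpos v).ne')).bddAbove
  exact (div_le_iff₀ (hpos v)).1 (le_ciSup hbdd v)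

variable [Nontrivial E]

lemma exists_inner_eq_wulffGauge_mul (hc : Continuous h) (hpos : ∀ v, 0 < h v) (x : E) :
    ∃ v : sphere (0 : E) 1, ⟪x, (v : E)⟫ = wulffGauge h x * h v := by
  have : Nonempty (sphere (0 : E) 1) := (NormedSpace.sphere_nonempty.2 zero_le_one).to_subtype
  obtain ⟨v, -, hv⟩ := isCompact_univ.exists_sSup_image_eq univ_nonempty
    (f := fun v : sphere (0 : E) 1 => ⟪x, (v : E)⟫ / h v)
    (Continuous.div (by fun_prop) hc fun v => (hpos v).ne').continuousOn
  refine ⟨v, (div_eq_iff (hpos v).ne').1 ?_⟩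
  rw [wulffGauge, ← sSup_range, ← image_univ]
  exact hv.symm

lemma wulffShape_eq_setOf_wulffGauge_le_one (hc : Continuous h) (hpos : ∀ v, 0 < h v) :
    wulffShape h = {x | wulffGauge h x ≤ 1} := by
  ext x
  refine ⟨fun hx => ?_, fun (hx : _ ≤ _) v => (inner_le_wulffGauge_mul hc hpos x v).trans
    (mul_le_of_le_one_left (hpos v).le hx)⟩
  obtain ⟨v, hv⟩ := exists_inner_eq_wulffGauge_mul hc hpos x
  exact le_of_mul_le_mul_right (by rw [← hv, one_mul]; exact hx v) (hpos v)

lemma wulffGauge_le_mul (hhc : Continuous h) (hh : ∀ v, 0 < h v) (hkc : Continuous k)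
    (hk : ∀ v, 0 < k v) {c : ℝ} (hkh : ∀ v, k v ≤ c * h v) (hx : 0 ≤ wulffGauge k x) :
    wulffGauge h x ≤ c * wulffGauge k x := by
  obtain ⟨v, hv⟩ := exists_inner_eq_wulffGauge_mul hhc hh x
  refine le_of_mul_le_mul_right ?_ (hh v)
  calc wulffGauge h x * h v ≤ wulffGauge k x * k v := hv ▸ inner_le_wulffGauge_mul hkc hk x v
    _ ≤ wulffGauge k x * (c * h v) := by gcongr; exact hkh v
    _ = c * wulffGauge k x * h v := by ring

lemma isStarGauge_wulffGauge (hc : Continuous h) (hpos : ∀ v, 0 < h v) :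
    IsStarGauge (wulffGauge h) := by
  have : Nonempty (sphere (0 : E) 1) := (NormedSpace.sphere_nonempty.2 zero_le_one).to_subtype
  obtain ⟨v₀, -, hmin⟩ := isCompact_univ.exists_isMinOn univ_nonempty hc.continuousOn
  obtain ⟨v₁, -, hmax⟩ := isCompact_univ.exists_isMaxOn univ_nonempty hc.continuousOn
  have hge (x : E) : (h v₁)⁻¹ * ‖x‖ ≤ wulffGauge h x := by
    rcases eq_or_ne x 0 with rfl | hx
    · simp [wulffGauge]
    obtain ⟨v, hv⟩ := exists_norm_smul_unitSphere hx
    have hinner : ‖x‖ = ⟪x, (v : E)⟫ := by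
      conv_rhs => rw [← hv]
      rw [real_inner_smul_left, real_inner_self_eq_norm_sq, norm_coe_unitSphere]
      ring
    have hx0 : 0 ≤ wulffGauge h x := nonneg_of_mul_nonneg_left
      ((norm_nonneg x).trans (hinner ▸ inner_le_wulffGauge_mul hc hpos x v)) (hpos v)
    rw [inv_mul_le_iff₀ (hpos v₁), mul_comm]
    calc ‖x‖ ≤ wulffGauge h x * h v := hinner ▸ inner_le_wulffGauge_mul hc hpos x v
      _ ≤ wulffGauge h x * h v₁ := mul_le_mul_of_nonneg_left (hmax (mem_univ v)) hx0
  refine ⟨fun t ht x => ?_, ⟨(h v₀)⁻¹.toNNReal, LipschitzWith.of_le_add_mul _ fun x y => ?_⟩,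
    (h v₁)⁻¹, inv_pos.2 (hpos v₁), hge⟩
  · simp only [wulffGauge, real_inner_smul_left, mul_div_assoc, Real.mul_iSup_of_nonneg ht]
  · obtain ⟨v, hv⟩ := exists_inner_eq_wulffGauge_mul hc hpos x
    rw [Real.coe_toNNReal _ (inv_pos.2 (hpos v₀)).le, dist_eq_norm]
    refine le_of_mul_le_mul_right ?_ (hpos v)
    calc wulffGauge h x * h v = ⟪y, (v : E)⟫ + ⟪x - y, (v : E)⟫ := by
          rw [← hv, inner_sub_left]; ring
      _ ≤ wulffGauge h y * h v + ‖x - y‖ :=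
          add_le_add (inner_le_wulffGauge_mul hc hpos y v) (inner_unitSphere_le_norm _ v)
      _ ≤ wulffGauge h y * h v + (h v₀)⁻¹ * ‖x - y‖ * h v := by
          have hv₀ : h v₀ ≤ h v := hmin (mem_univ v)
          have hone : 1 ≤ (h v₀)⁻¹ * h v := (one_le_inv_mul₀ (hpos v₀)).2 hv₀
          have := mul_le_mul_of_nonneg_right hone (norm_nonneg (x - y))
          linarith
      _ = (wulffGauge h y + (h v₀)⁻¹ * ‖x - y‖) * h v := by ring

lemma isOuterNormal_of_inner_eq (hc : Continuous h) (hpos : ∀ v, 0 < h v) {v : sphere (0 : E) 1}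
    (hx : x ≠ 0) (hv : ⟪x, (v : E)⟫ = wulffGauge h x * h v) :
    IsOuterNormal (wulffGauge h) (radialProj (wulffGauge h) x) v := by
  have hgx := (isStarGauge_wulffGauge hc hpos).pos hx
  refine ⟨norm_coe_unitSphere v, fun y => ?_⟩
  rw [radialProj, real_inner_smul_left, hv, inv_mul_cancel_left₀ hgx.ne']
  exact inner_le_wulffGauge_mul hc hpos y v

lemma eq_of_inner_eq_wulffGauge_mul (hc : Continuous h) (hpos : ∀ v, 0 < h v) (hx : x ≠ 0)
    (hd : DifferentiableAt ℝ (wulffGauge h) x) {v w : sphere (0 : E) 1}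
    (hv : ⟪x, (v : E)⟫ = wulffGauge h x * h v) (hw : ⟪x, (w : E)⟫ = wulffGauge h x * h w) :
    v = w := by
  have hg := isStarGauge_wulffGauge hc hpos
  have hgx := hg.pos hx
  refine Subtype.ext ((isOuterNormal_of_inner_eq hc hpos hx hv).eq
    (isOuterNormal_of_inner_eq hc hpos hx hw) hg (hg.map_radialProj hx)
    (hg.differentiableAt_of_smul hgx ?_))
  rwa [radialProj, smul_inv_smul₀ hgx.ne']

end WulffGauge

section LogVariation

section

variable {X : Type*} {h ψ : X → ℝ}

/-- The curve through `h` in the direction `h * ψ`, chosen exponential so that it consists of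
positive functions for all times. -/
noncomputable def logVariation (h ψ : X → ℝ) (t : ℝ) (v : X) : ℝ := h v * Real.exp (t * ψ v)

lemma logVariation_zero (h ψ : X → ℝ) : logVariation h ψ 0 = h := by
  ext v
  rw [logVariation, zero_mul, Real.exp_zero, mul_one]

lemma logVariation_pos (hpos : ∀ v, 0 < h v) (ψ : X → ℝ) (t : ℝ) (v : X) :
    0 < logVariation h ψ t v :=
  mul_pos (hpos v) (Real.exp_pos _)

lemma hasDerivAt_logVariation (h ψ : X → ℝ) (t : ℝ) (v : X) :
    HasDerivAt (logVariation h ψ · v) (ψ v * logVariation h ψ t v) t := by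
  refine ((((hasDerivAt_id' t).mul_const (ψ v)).exp).const_mul (h v)).congr_deriv ?_
  rw [logVariation]
  ring

lemma logVariation_le_exp_mul (hpos : ∀ v, 0 < h v) {C : ℝ} (hC : ∀ v, |ψ v| ≤ C) (s t : ℝ)
    (v : X) : logVariation h ψ s v ≤ Real.exp (C * |s - t|) * logVariation h ψ t v := by
  have hexp : s * ψ v ≤ C * |s - t| + t * ψ v := by
    have := (le_abs_self _).trans ((abs_mul (ψ v) (s - t)).trans_le
      (mul_le_mul_of_nonneg_right (hC v) (abs_nonneg _)))
    linarith
  calc logVariation h ψ s v ≤ h v * Real.exp (C * |s - t| + t * ψ v) :=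
        mul_le_mul_of_nonneg_left (Real.exp_le_exp.2 hexp) (hpos v).le
    _ = Real.exp (C * |s - t|) * logVariation h ψ t v := by
        rw [logVariation, Real.exp_add]; ring

variable [TopologicalSpace X]

lemma continuous_logVariation (hc : Continuous h) (hψ : Continuous ψ) :
    Continuous fun z : ℝ × X => logVariation h ψ z.1 z.2 := by
  unfold logVariation
  fun_prop

lemma continuous_logVariation_right (hc : Continuous h) (hψ : Continuous ψ) (t : ℝ) :
    Continuous (logVariation h ψ t) :=
  (continuous_logVariation hc hψ).comp (by fun_prop : Continuous fun v => (t, v))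

lemma hasDerivAt_integral_logVariation_rpow [CompactSpace X] [MeasurableSpace X]
    [OpensMeasurableSpace X] (m : Measure X) [IsFiniteMeasure m] (hc : Continuous h)
    (hpos : ∀ v, 0 < h v) (hψ : Continuous ψ) (p : ℝ) :
    HasDerivAt (fun t => ∫ v, logVariation h ψ t v ^ p ∂m) (∫ v, p * h v ^ p * ψ v ∂m) 0 := by
  have hcont : Continuous fun z : ℝ × X => logVariation h ψ z.1 z.2 ^ p :=
    (continuous_logVariation hc hψ).rpow_const fun z => .inl (logVariation_pos hpos ψ z.1 z.2).ne'
  have hderiv := hasDerivAt_integral_of_continuous m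
    (F := fun t v => logVariation h ψ t v ^ p)
    (F' := fun t v => p * ψ v * logVariation h ψ t v ^ p)
    (fun t => hcont.comp (by fun_prop : Continuous fun v => (t, v))) (by fun_prop)
    (fun t v => ?_) 0
  · simpa only [logVariation_zero, mul_right_comm p] using hderiv
  · have hne := (logVariation_pos hpos ψ t v).ne'
    refine ((hasDerivAt_logVariation h ψ t v).rpow_const (.inl hne)).congr_deriv ?_
    rw [Real.rpow_sub_one hne]
    field_simp

end

variable {E : Type*} [NormedAddCommGroup E] {h ψ : sphere (0 : E) 1 → ℝ} {x : E}

lemma IsAdmissible.logVariation (hh : IsAdmissible h) (hψ : Continuous ψ)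
    (hψe : ∀ v, ψ (-v) = ψ v) (t : ℝ) : IsAdmissible (logVariation h ψ t) where
  continuous := continuous_logVariation_right hh.continuous hψ t
  pos := logVariation_pos hh.pos ψ t
  even v := by simp only [LpGaussDual.logVariation, hh.even, hψe]

variable [InnerProductSpace ℝ E] [FiniteDimensional ℝ E] [Nontrivial E]

lemma hasDerivAt_wulffGauge_logVariation (hc : Continuous h) (hpos : ∀ v, 0 < h v)
    (hψ : Continuous ψ) (hx : x ≠ 0) (hd : DifferentiableAt ℝ (wulffGauge h) x)
    {v : sphere (0 : E) 1} (hv : ⟪x, (v : E)⟫ = wulffGauge h x * h v) :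
    HasDerivAt (fun t => wulffGauge (logVariation h ψ t) x) (-ψ v * wulffGauge h x) 0 := by
  have hne (t : ℝ) (w : sphere (0 : E) 1) := (logVariation_pos hpos ψ t w).ne'
  have hF : Continuous fun z : ℝ × sphere (0 : E) 1 =>
      ⟪x, (z.2 : E)⟫ / logVariation h ψ z.1 z.2 :=
    .div (by fun_prop) (continuous_logVariation hc hψ) fun z => hne z.1 z.2
  have hvx : ⟪x, (v : E)⟫ / h v = wulffGauge h x := (div_eq_iff (hpos v).ne').2 hv
  have hderiv := hasDerivAt_iSup_of_unique_max (t₀ := 0) (x₀ := v)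
    (F := fun t (w : sphere (0 : E) 1) => ⟪x, (w : E)⟫ / logVariation h ψ t w)
    (F' := fun t w => -ψ w * (⟪x, (w : E)⟫ / logVariation h ψ t w)) hF (by fun_prop)
    (fun t w => ?_) fun w hw => ?_
  · exact hderiv.congr_deriv (by rw [logVariation_zero, hvx])
  · refine ((hasDerivAt_const t ⟪x, (w : E)⟫).fun_div
      (hasDerivAt_logVariation h ψ t w) (hne t w)).congr_deriv ?_
    have := hne t w
    field_simp
    ring
  · rw [logVariation_zero, hvx]
    refine lt_of_le_of_ne ((div_le_iff₀ (hpos w)).2 (inner_le_wulffGauge_mul hc hpos x w)) ?_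
    intro heq
    exact hw (eq_of_inner_eq_wulffGauge_mul hc hpos hx hd ((div_eq_iff (hpos w).ne').1 heq) hv)

lemma lipschitzWith_log_wulffGauge_logVariation (hc : Continuous h) (hpos : ∀ v, 0 < h v)
    (hψ : Continuous ψ) {C : NNReal} (hC : ∀ v, |ψ v| ≤ C) (hx : x ≠ 0) :
    LipschitzWith C fun t => Real.log (wulffGauge (logVariation h ψ t) x) := by
  have hcont := continuous_logVariation_right hc hψ
  have hgx (t : ℝ) : 0 < wulffGauge (logVariation h ψ t) x :=
    (isStarGauge_wulffGauge (hcont t) (logVariation_pos hpos ψ t)).pos hx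
  refine LipschitzWith.of_le_add_mul C fun s t => ?_
  rw [Real.log_le_iff_le_exp (hgx s), Real.exp_add, Real.exp_log (hgx t), mul_comm, dist_comm]
  exact wulffGauge_le_mul (hcont s) (logVariation_pos hpos ψ s) (hcont t)
    (logVariation_pos hpos ψ t) (logVariation_le_exp_mul hpos hC t s) (hgx t).le

variable {q : ℝ}

lemma lipschitzWith_radialPrimitive_wulffGauge_logVariation (hq : 0 < q) (hc : Continuous h)
    (hpos : ∀ v, 0 < h v) (hψ : Continuous ψ) {C : NNReal} (hC : ∀ v, |ψ v| ≤ C) (hx : x ≠ 0) :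
    LipschitzWith ((Real.exp (q ^ 2 / 2)).toNNReal * C) fun t =>
      radialPrimitive q (wulffGauge (logVariation h ψ t) x)⁻¹ := by
  have hgx (t : ℝ) : 0 < wulffGauge (logVariation h ψ t) x :=
    (isStarGauge_wulffGauge (continuous_logVariation_right hc hψ t)
      (logVariation_pos hpos ψ t)).pos hx
  have hlog := (lipschitzWith_radialPrimitive_exp hq).comp
    (lipschitzWith_log_wulffGauge_logVariation hc hpos hψ hC hx).neg
  simpa only [Function.comp_def, Pi.neg_apply, Real.exp_neg, Real.exp_log (hgx _)] using hlog

lemma hasDerivAt_radialPrimitive_wulffGauge_logVariation (hq : 0 < q) (hc : Continuous h)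
    (hpos : ∀ v, 0 < h v) (hψ : Continuous ψ) (hx : x ≠ 0)
    (hd : DifferentiableAt ℝ (wulffGauge h) x) {v : sphere (0 : E) 1}
    (hv : ⟪x, (v : E)⟫ = wulffGauge h x * h v) :
    HasDerivAt (fun t => radialPrimitive q (wulffGauge (logVariation h ψ t) x)⁻¹)
      (radialDensity q (wulffGauge h x)⁻¹ * (wulffGauge h x)⁻¹ * ψ v) 0 := by
  have hgx := (isStarGauge_wulffGauge hc hpos).pos hx
  have hinv := (hasDerivAt_wulffGauge_logVariation hc hpos hψ hx hd hv).fun_inv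
    (by rw [logVariation_zero]; exact hgx.ne')
  rw [logVariation_zero] at hinv
  have hprim := hasDerivAt_radialPrimitive hq (inv_pos.2 hgx)
  refine (HasDerivAt.comp_of_eq 0 hprim hinv (by rw [logVariation_zero])).congr_deriv ?_
  field_simp

lemma continuous_radialPrimitive_wulffGauge (hq : 0 < q) (hc : Continuous h)
    (hpos : ∀ v, 0 < h v) :
    Continuous fun u : sphere (0 : E) 1 => radialPrimitive q (wulffGauge h u)⁻¹ := by
  have hg := isStarGauge_wulffGauge hc hpos
  refine continuous_iff_continuousAt.2 fun u => ?_
  have hu := hg.pos (ne_zero_of_mem_unit_sphere u)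
  exact ContinuousAt.comp (f := fun u : sphere (0 : E) 1 => (wulffGauge h u)⁻¹)
    (hasDerivAt_radialPrimitive hq (inv_pos.2 hu)).continuousAt
    ((hg.continuous.comp continuous_subtype_val).continuousAt.inv₀ hu.ne')

variable [MeasurableSpace E] [BorelSpace E]

lemma gaussDualVolume_real_wulffShape (hq : 0 < q) (hc : Continuous h) (hpos : ∀ v, 0 < h v) :
    (gaussDualVolume E q).real (wulffShape h) =
      ∫ u : sphere (0 : E) 1, radialPrimitive q (wulffGauge h u)⁻¹ ∂volume.toSphere := by
  have hg := isStarGauge_wulffGauge hc hpos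
  rw [measureReal_def, wulffShape_eq_setOf_wulffGauge_le_one hc hpos, hg.gaussDualVolume_le_one hq,
    integral_eq_lintegral_of_nonneg_ae]
  · exact .of_forall fun u => radialPrimitive_nonneg q (inv_nonneg.2 (hg.nonneg u))
  · exact (continuous_radialPrimitive_wulffGauge hq hc hpos).aestronglyMeasurable

variable {α : sphere (0 : E) 1 → sphere (0 : E) 1}

lemma hasDerivAt_gaussDualVolume_wulffShape_logVariation (hq : 0 < q) (hc : Continuous h)
    (hpos : ∀ v, 0 < h v) (hψ : Continuous ψ) (hαm : Measurable α)
    (hα : ∀ u : sphere (0 : E) 1, ⟪(u : E), (α u : E)⟫ = wulffGauge h u * h (α u)) :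
    HasDerivAt (fun t => (gaussDualVolume E q).real (wulffShape (logVariation h ψ t)))
      (∫ u : sphere (0 : E) 1, radialDensity q (wulffGauge h u)⁻¹ * (wulffGauge h u)⁻¹ * ψ (α u)
        ∂volume.toSphere) 0 := by
  have hcont := continuous_logVariation_right hc hψ
  have hg := isStarGauge_wulffGauge hc hpos
  obtain ⟨C, hC⟩ := isCompact_univ.exists_bound_of_continuousOn hψ.continuousOn
  have hC' (v : sphere (0 : E) 1) : |ψ v| ≤ C.toNNReal :=
    (hC v (mem_univ v)).trans (Real.le_coe_toNNReal C)
  have hprim (t : ℝ) := continuous_radialPrimitive_wulffGauge hq (hcont t)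
    (logVariation_pos hpos ψ t)
  simp only [fun t => gaussDualVolume_real_wulffShape hq (hcont t) (logVariation_pos hpos ψ t)]
  refine (hasDerivAt_integral_of_dominated_loc_of_lip
    (bound := fun _ => (Real.exp (q ^ 2 / 2)).toNNReal * C.toNNReal) univ_mem
    (.of_forall fun t => (hprim t).aestronglyMeasurable)
    ((hprim 0).integrable_of_hasCompactSupport (HasCompactSupport.of_compactSpace _)) ?_ ?_
    (integrable_const _) ?_).2
  · have hgm : Measurable fun u : sphere (0 : E) 1 => (wulffGauge h u)⁻¹ :=
      (hg.continuous.measurable.comp measurable_subtype_coe).inv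
    exact ((((measurable_radialDensity q).comp hgm).mul hgm).mul
      (hψ.measurable.comp hαm)).aestronglyMeasurable
  · refine .of_forall fun u => LipschitzWith.lipschitzOnWith ?_
    rw [← NNReal.coe_mul, Real.nnabs_coe]
    exact lipschitzWith_radialPrimitive_wulffGauge_logVariation hq hc hpos hψ hC'
      (ne_zero_of_mem_unit_sphere u)
  · filter_upwards [hg.ae_differentiableAt_toSphere] with u hu
    exact hasDerivAt_radialPrimitive_wulffGauge_logVariation hq hc hpos hψ
      (ne_zero_of_mem_unit_sphere u) hu (hα u)

lemma integral_eq_of_isMaxOn_wulffFunctional {m : Measure (sphere (0 : E) 1)} [IsFiniteMeasure m]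
    {p l : ℝ} (hq : 0 < q) (hh : IsAdmissible h)
    (hmax : IsMaxOn (wulffFunctional (gaussDualVolume E q) m p l) {k | IsAdmissible k} h)
    (hαm : Measurable α)
    (hα : ∀ u : sphere (0 : E) 1, ⟪(u : E), (α u : E)⟫ = wulffGauge h u * h (α u))
    (hψ : Continuous ψ) (hψe : ∀ v, ψ (-v) = ψ v) :
    ∫ u : sphere (0 : E) 1, radialDensity q (wulffGauge h u)⁻¹ * (wulffGauge h u)⁻¹ * ψ (α u)
      ∂volume.toSphere = l * ∫ v, p * h v ^ p * ψ v ∂m := by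
  have hderiv := (hasDerivAt_gaussDualVolume_wulffShape_logVariation hq hh.continuous hh.pos hψ
    hαm hα).fun_sub
      ((hasDerivAt_integral_logVariation_rpow m hh.continuous hh.pos hψ p).const_mul l)
  refine sub_eq_zero.1 (IsLocalMax.hasDerivAt_eq_zero (.of_forall fun t => ?_) hderiv)
  rw [logVariation_zero]
  exact hmax (hh.logVariation hψ hψe t)

end LogVariation

section EulerLagrange

open scoped BoundedContinuousFunction

section Invariance

variable {X : Type*} [MeasurableSpace X] {m : Measure X}

lemma measurePreserving_withDensity {e : X → X} (he : MeasurePreserving e m m) {f : X → ℝ≥0∞}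
    (hf : Measurable f) (hfe : ∀ x, f (e x) = f x) :
    MeasurePreserving e (m.withDensity f) (m.withDensity f) := by
  refine ⟨he.measurable, Measure.ext fun s hs => ?_⟩
  rw [Measure.map_apply he.measurable hs, withDensity_apply _ (he.measurable hs),
    withDensity_apply _ hs, ← he.setLIntegral_comp_preimage hs hf]
  simp only [hfe]

lemma measurePreserving_map_of_ae_semiconj {Y : Type*} [MeasurableSpace Y] {e : X → X}
    {e' : Y → Y} {α : X → Y} (he : MeasurePreserving e m m) (hα : Measurable α)
    (he' : Measurable e') (h : ∀ᵐ x ∂m, α (e x) = e' (α x)) :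
    MeasurePreserving e' (m.map α) (m.map α) := by
  refine ⟨he', ?_⟩
  calc (m.map α).map e' = m.map (e' ∘ α) := Measure.map_map he' hα
    _ = m.map (α ∘ e) := Measure.map_congr (h.mono fun _ => Eq.symm)
    _ = m.map α := by rw [← Measure.map_map hα he.measurable, he.map_eq]

lemma integral_withDensity_ofReal {f : X → ℝ} (hf : Measurable f) (h0 : ∀ x, 0 ≤ f x)
    (ψ : X → ℝ) :
    ∫ x, ψ x ∂m.withDensity (fun x => ENNReal.ofReal (f x)) = ∫ x, f x * ψ x ∂m := by
  rw [integral_withDensity_eq_integral_toReal_smul hf.ennreal_ofReal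
    (.of_forall fun _ => ENNReal.ofReal_lt_top)]
  simp only [ENNReal.toReal_ofReal (h0 _), smul_eq_mul]

variable [TopologicalSpace X] [BorelSpace X] {e : X → X}

lemma integral_add_comp_of_measurePreserving [IsFiniteMeasure m] (hec : Continuous e)
    (he : MeasurePreserving e m m) (ψ : X →ᵇ ℝ) :
    ∫ x, (ψ x + ψ (e x)) ∂m = 2 * ∫ x, ψ x ∂m := by
  have hcomp : ∫ x, ψ (e x) ∂m = ∫ x, ψ x ∂m := by
    conv_rhs => rw [← he.map_eq]
    exact (integral_map he.measurable.aemeasurable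
      ψ.continuous.measurable.aestronglyMeasurable).symm
  have hint : Integrable (fun x => ψ (e x)) m := (ψ.compContinuous ⟨e, hec⟩).integrable m
  rw [integral_add (ψ.integrable m) hint, hcomp, two_mul]

lemma ext_of_forall_integral_eq_of_involutive [HasOuterApproxClosed X] {m' : Measure X}
    [IsFiniteMeasure m] [IsFiniteMeasure m'] (hec : Continuous e) (hei : Function.Involutive e)
    (hm : MeasurePreserving e m m) (hm' : MeasurePreserving e m' m')
    (h : ∀ ψ : X → ℝ, Continuous ψ → (∀ x, ψ (e x) = ψ x) → ∫ x, ψ x ∂m = ∫ x, ψ x ∂m') :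
    m = m' := by
  refine ext_of_forall_integral_eq_of_IsFiniteMeasure fun ψ => ?_
  have hsymm := h (fun x => ψ x + ψ (e x)) (by fun_prop) fun x => by rw [hei, add_comm]
  rw [integral_add_comp_of_measurePreserving hec hm,
    integral_add_comp_of_measurePreserving hec hm'] at hsymm
  linarith

end Invariance

variable {E : Type*} [NormedAddCommGroup E] [InnerProductSpace ℝ E] [FiniteDimensional ℝ E]

lemma continuous_radialDensity_wulffGauge [Nontrivial E] (q : ℝ)
    {h : sphere (0 : E) 1 → ℝ} (hc : Continuous h) (hpos : ∀ v, 0 < h v) :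
    Continuous fun u : sphere (0 : E) 1 =>
      radialDensity q (wulffGauge h u)⁻¹ * (wulffGauge h u)⁻¹ := by
  have hg := isStarGauge_wulffGauge hc hpos
  have hinv : Continuous fun u : sphere (0 : E) 1 => (wulffGauge h u)⁻¹ :=
    (hg.continuous.comp continuous_subtype_val).inv₀ fun u =>
      (hg.pos (ne_zero_of_mem_unit_sphere u)).ne'
  refine .mul (continuous_iff_continuousAt.2 fun u => ?_) hinv
  exact ContinuousAt.comp (f := fun u : sphere (0 : E) 1 => (wulffGauge h u)⁻¹)
    (continuousAt_radialDensity q (inv_pos.2 (hg.pos (ne_zero_of_mem_unit_sphere u))))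
    hinv.continuousAt

variable [MeasurableSpace E] [BorelSpace E]

lemma measurePreserving_neg_toSphere :
    MeasurePreserving (fun u : sphere (0 : E) 1 => -u) (volume : Measure E).toSphere
      (volume : Measure E).toSphere := by
  have hneg : Measurable fun u : sphere (0 : E) 1 => -u := continuous_neg.measurable
  refine ⟨hneg, Measure.ext fun s hs => ?_⟩
  have himage : ((↑) : sphere (0 : E) 1 → E) '' ((fun u => -u) ⁻¹' s) = -((↑) '' s) := by
    rw [← neg_involutive.image_eq_preimage_symm, ← image_neg_eq_neg, image_image, image_image]
    rfl
  rw [Measure.map_apply hneg hs, Measure.toSphere_apply' _ hs, Measure.toSphere_apply' _ (hneg hs),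
    himage, Set.smul_neg, Measure.measure_neg]

variable [Nontrivial E] {h : sphere (0 : E) 1 → ℝ} {α : sphere (0 : E) 1 → sphere (0 : E) 1}
  {p q l : ℝ}

lemma ae_map_neg_eq_neg_map (hc : Continuous h) (hpos : ∀ v, 0 < h v) (he : ∀ v, h (-v) = h v)
    (hα : ∀ u : sphere (0 : E) 1, ⟪(u : E), (α u : E)⟫ = wulffGauge h u * h (α u)) :
    ∀ᵐ u ∂(volume : Measure E).toSphere, α (-u) = -α u := by
  filter_upwards [(isStarGauge_wulffGauge hc hpos).ae_differentiableAt_toSphere] with u hu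
  refine neg_eq_iff_eq_neg.1
    (eq_of_inner_eq_wulffGauge_mul hc hpos (ne_zero_of_mem_unit_sphere u) hu ?_ (hα u))
  have hneg := hα (-u)
  rwa [coe_neg_sphere, wulffGauge_neg he, inner_neg_left, ← inner_neg_right, ← coe_neg_sphere,
    ← he (α (-u))] at hneg

theorem map_withDensity_eq_of_isMaxOn_wulffFunctional {m : Measure (sphere (0 : E) 1)}
    [IsFiniteMeasure m] (hm : MeasurePreserving (fun u : sphere (0 : E) 1 => -u) m m) (hp : 0 ≤ p)
    (hq : 0 < q) (hl : 0 ≤ l) (hh : IsAdmissible h)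
    (hmax : IsMaxOn (wulffFunctional (gaussDualVolume E q) m p l) {k | IsAdmissible k} h)
    (hαm : Measurable α)
    (hα : ∀ u : sphere (0 : E) 1, ⟪(u : E), (α u : E)⟫ = wulffGauge h u * h (α u)) :
    ((volume : Measure E).toSphere.withDensity fun u => ENNReal.ofReal
        (radialDensity q (wulffGauge h u)⁻¹ * (wulffGauge h u)⁻¹)).map α =
      m.withDensity fun v => ENNReal.ofReal (l * p * h v ^ p) := by
  have hg := isStarGauge_wulffGauge hh.continuous hh.pos
  have hD := continuous_radialDensity_wulffGauge q hh.continuous hh.pos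
  have hD0 (u : sphere (0 : E) 1) :
      0 ≤ radialDensity q (wulffGauge h u)⁻¹ * (wulffGauge h u)⁻¹ := by
    have hu := inv_pos.2 (hg.pos (ne_zero_of_mem_unit_sphere u))
    exact (mul_pos (radialDensity_pos q hu) hu).le
  have hP : Continuous fun v => l * p * h v ^ p :=
    continuous_const.mul (hh.continuous.rpow_const fun v => .inr hp)
  have hP0 (v : sphere (0 : E) 1) : 0 ≤ l * p * h v ^ p :=
    mul_nonneg (mul_nonneg hl hp) (Real.rpow_nonneg (hh.pos v).le p)
  have := isFiniteMeasure_withDensity_ofReal (μ := (volume : Measure E).toSphere)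
    (hD.integrable_of_hasCompactSupport (HasCompactSupport.of_compactSpace _)).2
  have := isFiniteMeasure_withDensity_ofReal (μ := m)
    (hP.integrable_of_hasCompactSupport (HasCompactSupport.of_compactSpace _)).2
  have hneg : Continuous fun u : sphere (0 : E) 1 => -u := continuous_neg
  refine ext_of_forall_integral_eq_of_involutive hneg neg_involutive
    (measurePreserving_map_of_ae_semiconj (measurePreserving_withDensity
      measurePreserving_neg_toSphere hD.measurable.ennreal_ofReal fun u => ?_) hαm hneg.measurable
      (withDensity_absolutelyContinuous _ _
        (ae_map_neg_eq_neg_map hh.continuous hh.pos hh.even hα)))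
    (measurePreserving_withDensity hm hP.measurable.ennreal_ofReal fun v => ?_)
    fun ψ hψ hψe => ?_
  · rw [coe_neg_sphere, wulffGauge_neg hh.even]
  · rw [hh.even]
  · rw [integral_map hαm.aemeasurable hψ.aestronglyMeasurable,
      integral_withDensity_ofReal hD.measurable hD0, integral_withDensity_ofReal hP.measurable hP0,
      integral_eq_of_isMaxOn_wulffFunctional hq hh hmax hαm hα hψ hψe, ← integral_const_mul]
    simp only [mul_assoc]

end EulerLagrange

section CurvatureMeasure

variable {E : Type*} [NormedAddCommGroup E] [InnerProductSpace ℝ E] {g : E → ℝ} {ν : E → E}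
  {K : Set E}

lemma isStarGauge_norm : IsStarGauge fun x : E => ‖x‖ where
  map_smul t ht x := by rw [norm_smul, Real.norm_of_nonneg ht]
  exists_lipschitzWith := ⟨1, lipschitzWith_one_norm⟩
  exists_mul_norm_le := ⟨1, one_pos, fun x => (one_mul ‖x‖).le⟩

namespace IsStarGauge

lemma isCompact_setOf_le_one [ProperSpace E] (hg : IsStarGauge g) : IsCompact {x | g x ≤ 1} := by
  obtain ⟨c, hc, hcg⟩ := hg.exists_mul_norm_le
  refine (isCompact_closedBall (0 : E) c⁻¹).of_isClosed_subset
    (isClosed_le hg.continuous continuous_const) fun x (hx : g x ≤ 1) => ?_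
  rw [mem_closedBall_zero_iff, ← one_div, le_div_iff₀' hc]
  exact (hcg x).trans hx

lemma zero_mem_interior_setOf_le_one (hg : IsStarGauge g) : (0 : E) ∈ interior {x | g x ≤ 1} := by
  have hlt : {x | g x < 1} ∈ 𝓝 (0 : E) :=
    (isOpen_lt hg.continuous continuous_const).mem_nhds (hg.map_zero.trans_lt one_pos)
  exact mem_interior_iff_mem_nhds.2 (mem_of_superset hlt fun x (hx : g x < 1) => hx.le)

lemma frontier_setOf_le_one (hg : IsStarGauge g) : frontier {x | g x ≤ 1} = {x | g x = 1} := by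
  refine (frontier_le_subset_eq hg.continuous continuous_const).antisymm fun x (hx : g x = 1) => ?_
  rw [(isClosed_le hg.continuous continuous_const).frontier_eq]
  refine ⟨hx.le, fun hint => ?_⟩
  have hray : Tendsto (fun t : ℝ => t • x) (𝓝[>] 1) (𝓝 x) := by
    have hcont : Continuous fun t : ℝ => t • x := by fun_prop
    simpa only [one_smul] using (hcont.tendsto 1).mono_left nhdsWithin_le_nhds
  obtain ⟨t, ht, htx⟩ :=
    (eventually_mem_nhdsWithin.and (hray (mem_interior_iff_mem_nhds.1 hint))).exists
  have ht1 : (1 : ℝ) < t := ht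
  have hgt : g (t • x) ≤ 1 := htx
  rw [hg.map_smul t (one_pos.trans ht1).le, hx, mul_one] at hgt
  exact hgt.not_gt ht1

lemma isOuterNormal_of_forall_inner_le (hg : IsStarGauge g) {x v : E} (hv : ‖v‖ = 1)
    (h : ∀ y, g y ≤ 1 → ⟪y, v⟫ ≤ ⟪x, v⟫) : IsOuterNormal g x v := by
  refine ⟨hv, fun y => ?_⟩
  rcases eq_or_ne y 0 with rfl | hy
  · rw [inner_zero_left, hg.map_zero, zero_mul]
  · have hgy := h _ (hg.map_radialProj hy).le
    rwa [radialProj, real_inner_smul_left, inv_mul_le_iff₀ (hg.pos hy)] at hgy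

end IsStarGauge

variable [MeasurableSpace E]

/-- An outer unit normal selection for `K`, as a map defined on all of `E` whose values off the
frontier of `K` are irrelevant. -/
structure IsNormalSelection (K : Set E) (ν : E → E) : Prop where
  measurable : Measurable ν
  mem_sphere : ∀ x, ν x ∈ sphere (0 : E) 1
  inner_le : ∀ x ∈ frontier K, ∀ y ∈ K, ⟪y, ν x⟫ ≤ ⟪x, ν x⟫

lemma IsNormalSelection.isOuterNormal (hν : IsNormalSelection {x | g x ≤ 1} ν)
    (hg : IsStarGauge g) {x : E} (hx : g x = 1) : IsOuterNormal g x (ν x) :=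
  hg.isOuterNormal_of_forall_inner_le (mem_sphere_zero_iff_norm.1 (hν.mem_sphere x))
    (hν.inner_le x (hg.frontier_setOf_le_one.symm.subset hx))

variable [BorelSpace E]

/-- The `L_p` Gaussian dual curvature measure of `K` with respect to the outer unit normal selection
`ν`. The Hausdorff measure is normalised to agree with Lebesgue measure. -/
noncomputable def gaussDualCurvature (p q : ℝ) (K : Set E) (ν : E → E) : Measure E :=
  ((μHE[finrank ℝ E - 1].restrict (frontier K)).withDensity fun x => ENNReal.ofReal
    (⟪x, ν x⟫ ^ (1 - p) * ‖x‖ ^ (q - finrank ℝ E) * Real.exp (-‖x‖ ^ 2 / 2))).map ν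

lemma gaussDualCurvature_apply (p q : ℝ) (hν : Measurable ν) {η : Set E} (hη : MeasurableSet η) :
    gaussDualCurvature p q K ν η = ∫⁻ x in frontier K ∩ ν ⁻¹' η, ENNReal.ofReal
      (⟪x, ν x⟫ ^ (1 - p) * ‖x‖ ^ (q - finrank ℝ E) * Real.exp (-‖x‖ ^ 2 / 2))
        ∂μHE[finrank ℝ E - 1] := by
  rw [gaussDualCurvature, Measure.map_apply hν hη, withDensity_apply _ (hν hη),
    Measure.restrict_restrict (hν hη), inter_comm]

variable [FiniteDimensional ℝ E]

lemma lintegral_gaussDualCurvature_eq_supportMeasure (hg : IsStarGauge g)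
    (hν : IsNormalSelection {x | g x ≤ 1} ν) (p q : ℝ) {f : E → ℝ≥0∞} (hf : Measurable f) :
    ∫⁻ v, f v ∂gaussDualCurvature p q {x | g x ≤ 1} ν = ∫⁻ x, ENNReal.ofReal
      (⟪x, ν x⟫ ^ (-p) * (‖x‖ ^ (q - finrank ℝ E) * Real.exp (-‖x‖ ^ 2 / 2))) * f (ν x)
        ∂supportMeasure g ν := by
  have hνm := hν.measurable
  rw [gaussDualCurvature, lintegral_map hf hνm,
    lintegral_withDensity_eq_lintegral_mul _ (by fun_prop) (by fun_prop), supportMeasure,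
    lintegral_withDensity_eq_lintegral_mul _ (by fun_prop) (by fun_prop),
    hg.frontier_setOf_le_one]
  refine setLIntegral_congr_fun hg.measurableSet_level_one fun x hx => ?_
  have hpos := (hν.isOuterNormal hg hx).inner_pos hg
  simp only [Pi.mul_apply]
  rw [← mul_assoc, ← ENNReal.ofReal_mul hpos.le, ← mul_assoc, ← mul_assoc, sub_eq_neg_add,
    Real.rpow_add_one hpos.ne', mul_comm (⟪x, ν x⟫ ^ (-p))]

lemma lintegral_gaussDualCurvature [Nontrivial E] (hg : IsStarGauge g)
    (hν : IsNormalSelection {x | g x ≤ 1} ν) (p q : ℝ) {f : E → ℝ≥0∞} (hf : Measurable f) :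
    ∫⁻ v, f v ∂gaussDualCurvature p q {x | g x ≤ 1} ν = ∫⁻ u : sphere (0 : E) 1,
      ENNReal.ofReal (radialDensity q (g u)⁻¹ * (g u)⁻¹) *
        (ENNReal.ofReal (⟪radialProj g u, ν (radialProj g u)⟫ ^ (-p)) * f (ν (radialProj g u)))
        ∂(volume : Measure E).toSphere := by
  have hνm := hν.measurable
  rw [lintegral_gaussDualCurvature_eq_supportMeasure hg hν p q hf,
    ← hg.coneMeasure_eq_supportMeasure (fun x hx => hν.isOuterNormal hg hx) hνm,
    hg.lintegral_coneMeasure (by fun_prop)]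
  refine lintegral_congr fun u => ?_
  have hρ : 0 < (g u)⁻¹ := inv_pos.2 (hg.pos (ne_zero_of_mem_unit_sphere u))
  have hnorm : ‖radialProj g (u : E)‖ = (g u)⁻¹ := by
    rw [radialProj, norm_smul, norm_coe_unitSphere, mul_one, Real.norm_of_nonneg hρ.le]
  have hpow : (g u)⁻¹ ^ finrank ℝ E * (g u)⁻¹ ^ (q - finrank ℝ E) =
      (g u)⁻¹ ^ (q - 1) * (g u)⁻¹ := by
    rw [← Real.rpow_natCast, ← Real.rpow_add hρ, ← Real.rpow_add_one hρ.ne']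
    congr 1
    ring
  rw [← mul_assoc, ← mul_assoc (ENNReal.ofReal _) (ENNReal.ofReal _),
    ← ENNReal.ofReal_mul (pow_pos hρ _).le,
    ← ENNReal.ofReal_mul (mul_pos (radialDensity_pos q hρ) hρ).le, hnorm, radialDensity]
  congr 2
  linear_combination ⟪radialProj g (u : E), ν (radialProj g u)⟫ ^ (-p) *
    Real.exp (-(g u)⁻¹ ^ 2 / 2) * hpow

end CurvatureMeasure

section Existence

variable {E : Type*} [NormedAddCommGroup E] [InnerProductSpace ℝ E]
  {h : sphere (0 : E) 1 → ℝ} {ν : E → E} {p q l : ℝ}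

lemma convex_wulffShape (h : sphere (0 : E) 1 → ℝ) : Convex ℝ (wulffShape h) := by
  simp only [wulffShape, ofPred_forall]
  exact convex_iInter fun v => convex_halfSpace_le
    ⟨fun x y => inner_add_left x y _, fun c x => real_inner_smul_left x _ c⟩ (h v)

lemma wulffShape_eq_neg (he : ∀ v, h (-v) = h v) : wulffShape h = -wulffShape h := by
  refine Subset.antisymm (fun x hx => neg_mem_wulffShape he hx) fun x hx => ?_
  simpa only [neg_neg] using neg_mem_wulffShape he (mem_neg.1 hx)

variable [MeasurableSpace E] [FiniteDimensional ℝ E]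

lemma IsNormalSelection.inner_radialProj_wulffGauge [Nontrivial E]
    (hν : IsNormalSelection (wulffShape h) ν) (hc : Continuous h) (hpos : ∀ v, 0 < h v)
    (hatt : ∀ v : sphere (0 : E) 1, ∃ x ∈ wulffShape h, ⟪x, (v : E)⟫ = h v)
    (u : sphere (0 : E) 1) :
    ⟪radialProj (wulffGauge h) (u : E), ν (radialProj (wulffGauge h) u)⟫ =
      h ⟨ν (radialProj (wulffGauge h) u), hν.mem_sphere _⟩ := by
  have hg := isStarGauge_wulffGauge hc hpos
  have hK := wulffShape_eq_setOf_wulffGauge_le_one hc hpos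
  set x := radialProj (wulffGauge h) (u : E)
  have hx : wulffGauge h x = 1 := hg.map_radialProj (ne_zero_of_mem_unit_sphere u)
  have hxK : x ∈ wulffShape h := hK.symm.subset hx.le
  have hxf : x ∈ frontier (wulffShape h) := by
    rwa [hK, hg.frontier_setOf_le_one]
  obtain ⟨z, hz, hzh⟩ := hatt ⟨ν x, hν.mem_sphere x⟩
  exact (hxK ⟨ν x, hν.mem_sphere x⟩).antisymm (hzh.symm.trans_le (hν.inner_le x hxf z hz))

variable [BorelSpace E]

lemma gaussDualVolume_closedBall_ne_zero [Nontrivial E] (q : ℝ) :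
    gaussDualVolume E q (closedBall 0 1) ≠ 0 := by
  rw [gaussDualVolume, Ne, withDensity_apply_eq_zero (by fun_prop)]
  intro hnull
  have hsub : ball (0 : E) 1 \ {0} ⊆ {x | ENNReal.ofReal (‖x‖ ^ (q - finrank ℝ E) *
      Real.exp (-‖x‖ ^ 2 / 2)) ≠ 0} ∩ closedBall 0 1 := by
    rintro x ⟨hx, hx0⟩
    exact ⟨(ENNReal.ofReal_pos.2 (mul_pos (Real.rpow_pos_of_pos (norm_pos_iff.2 hx0) _)
      (Real.exp_pos _))).ne', ball_subset_closedBall hx⟩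
  have hball := measure_mono_null hsub hnull
  rw [measure_sdiff_null (measure_singleton _)] at hball
  exact (measure_ball_pos volume (0 : E) one_pos).ne' hball

lemma lintegral_rpow_neg_mul_withDensity {X : Type*} [MeasurableSpace X] {m : Measure X}
    {k : X → ℝ} (hk : Measurable k) (hpos : ∀ x, 0 < k x) {c : ℝ} (hc : 0 ≤ c) (p : ℝ)
    {f : X → ℝ≥0∞} (hf : Measurable f) :
    ∫⁻ x, ENNReal.ofReal (k x ^ (-p)) * f x ∂m.withDensity (fun x => ENNReal.ofReal (c * k x ^ p)) =
      ENNReal.ofReal c * ∫⁻ x, f x ∂m := by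
  rw [lintegral_withDensity_eq_lintegral_mul _ (by fun_prop) (by fun_prop),
    ← lintegral_const_mul _ hf]
  refine lintegral_congr fun x => ?_
  rw [Pi.mul_apply, ← mul_assoc, ← ENNReal.ofReal_mul
    (mul_nonneg hc (Real.rpow_nonneg (hpos x).le p)), mul_assoc c, ← Real.rpow_add (hpos x),
    add_neg_cancel, Real.rpow_zero, mul_one]

/-- The Euler–Lagrange equation, read through the area formula. -/
theorem gaussDualCurvature_wulffShape [Nontrivial E] {m : Measure (sphere (0 : E) 1)}
    [IsFiniteMeasure m] (hm : MeasurePreserving (fun u : sphere (0 : E) 1 => -u) m m)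
    (hp : 0 ≤ p) (hq : 0 < q) (hl : 0 ≤ l) (hh : IsAdmissible h)
    (hatt : ∀ v : sphere (0 : E) 1, ∃ x ∈ wulffShape h, ⟪x, (v : E)⟫ = h v)
    (hmax : IsMaxOn (wulffFunctional (gaussDualVolume E q) m p l) {k | IsAdmissible k} h)
    (hν : IsNormalSelection (wulffShape h) ν) :
    gaussDualCurvature p q (wulffShape h) ν = ENNReal.ofReal (l * p) • m.map Subtype.val := by
  have hg := isStarGauge_wulffGauge hh.continuous hh.pos
  have hK := wulffShape_eq_setOf_wulffGauge_le_one hh.continuous hh.pos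
  have hhm := hh.continuous.measurable
  set g := wulffGauge h
  let α : sphere (0 : E) 1 → sphere (0 : E) 1 := fun u => ⟨ν (radialProj g u), hν.mem_sphere _⟩
  have hαm : Measurable α := (hν.measurable.comp hg.measurable_radialProj_coe).subtype_mk
  have hproj (u : sphere (0 : E) 1) : ⟪radialProj g (u : E), ν (radialProj g u)⟫ = h (α u) :=
    hν.inner_radialProj_wulffGauge hh.continuous hh.pos hatt u
  have hα (u : sphere (0 : E) 1) : ⟪(u : E), (α u : E)⟫ = g u * h (α u) := by
    change ⟪(u : E), ν (radialProj g (u : E))⟫ = _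
    rw [← hproj, radialProj, real_inner_smul_left,
      mul_inv_cancel_left₀ (hg.pos (ne_zero_of_mem_unit_sphere u)).ne']
  have hEL := map_withDensity_eq_of_isMaxOn_wulffFunctional hm hp hq hl hh hmax hαm hα
  have hdens :=
    (continuous_radialDensity_wulffGauge q hh.continuous hh.pos).measurable.ennreal_ofReal
  refine Measure.ext_of_lintegral _ fun f hf => ?_
  calc ∫⁻ v, f v ∂gaussDualCurvature p q (wulffShape h) ν
      = ∫⁻ u : sphere (0 : E) 1, ENNReal.ofReal (radialDensity q (g u)⁻¹ * (g u)⁻¹) *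
          (ENNReal.ofReal (h (α u) ^ (-p)) * f (α u)) ∂(volume : Measure E).toSphere := by
        rw [hK] at hν ⊢
        rw [lintegral_gaussDualCurvature hg hν p q hf]
        simp only [hproj, α]
    _ = ∫⁻ v : sphere (0 : E) 1, ENNReal.ofReal (h v ^ (-p)) * f v
          ∂m.withDensity fun v => ENNReal.ofReal (l * p * h v ^ p) := by
        rw [← hEL, lintegral_map (by fun_prop) hαm,
          lintegral_withDensity_eq_lintegral_mul _ hdens (by fun_prop)]
        rfl
    _ = ∫⁻ v, f v ∂(ENNReal.ofReal (l * p) • m.map Subtype.val) := by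
        rw [lintegral_rpow_neg_mul_withDensity hhm hh.pos (mul_nonneg hl hp) p (by fun_prop),
          lintegral_smul_measure, lintegral_map hf measurable_subtype_coe, smul_eq_mul]

theorem exists_gaussDualCurvature_eq_smul [Nontrivial E] {m : Measure (sphere (0 : E) 1)}
    [IsFiniteMeasure m] (hm : MeasurePreserving (fun u : sphere (0 : E) 1 => -u) m m)
    (hm0 : ∀ v : sphere (0 : E) 1, m {u | ⟪(v : E), (u : E)⟫ ≠ 0} ≠ 0) (hp : 0 < p)
    (hq : 0 < q) :
    ∃ K : Set E, (IsCompact K ∧ Convex ℝ K ∧ (0 : E) ∈ interior K ∧ K = -K) ∧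
      ∃ κ : ℝ≥0∞, κ ≠ 0 ∧ κ ≠ ⊤ ∧ ∀ ν, IsNormalSelection K ν →
        gaussDualCurvature p q K ν = κ • m.map Subtype.val := by
  have := isFiniteMeasure_gaussDualVolume (E := E) hq
  obtain ⟨l, h, hl, hh, hatt, hmax⟩ := exists_isMaxOn_wulffFunctional
    (gaussDualVolume_absolutelyContinuous q) (gaussDualVolume_closedBall_ne_zero q) hm0 hp
  have hg := isStarGauge_wulffGauge hh.continuous hh.pos
  have hK := wulffShape_eq_setOf_wulffGauge_le_one hh.continuous hh.pos
  exact ⟨wulffShape h, ⟨hK ▸ hg.isCompact_setOf_le_one, convex_wulffShape h,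
    hK ▸ hg.zero_mem_interior_setOf_le_one, wulffShape_eq_neg hh.even⟩, ENNReal.ofReal (l * p),
    (ENNReal.ofReal_pos.2 (mul_pos hl hp)).ne', ENNReal.ofReal_ne_top, fun ν hν =>
    gaussDualCurvature_wulffShape hm hp.le hq hl.le hh hatt hmax hν⟩

end Existence

section SphereMeasures

lemma withDensity_apply_ne_zero_of_le {X : Type*} [MeasurableSpace X] {μ : Measure X}
    {F : X → ℝ≥0∞} {s : Set X} (hs : MeasurableSet s) (hμs : μ s ≠ 0) {c : ℝ≥0∞} (hc : c ≠ 0)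
    (hF : ∀ x ∈ s, c ≤ F x) : μ.withDensity F s ≠ 0 := by
  have hle : c * μ s ≤ μ.withDensity F s := by
    rw [withDensity_apply _ hs, ← setLIntegral_const]
    exact setLIntegral_mono' hs hF
  exact ((pos_iff_ne_zero.2 (mul_ne_zero hc hμs)).trans_le hle).ne'

variable {E : Type*} [NormedAddCommGroup E] [MeasurableSpace E] [BorelSpace E] {μ : Measure E}

lemma measurePreserving_neg_comap_coe
    (hμ : ∀ η ⊆ sphere (0 : E) 1, MeasurableSet η → μ (-η) = μ η) :
    MeasurePreserving (fun u : sphere (0 : E) 1 => -u) (μ.comap Subtype.val)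
      (μ.comap Subtype.val) := by
  have hemb : MeasurableEmbedding (Subtype.val : sphere (0 : E) 1 → E) :=
    .subtype_coe isClosed_sphere.measurableSet
  have hneg : Measurable fun u : sphere (0 : E) 1 => -u := continuous_neg.measurable
  refine ⟨hneg, Measure.ext fun A hA => ?_⟩
  have himage : Subtype.val '' ((fun u : sphere (0 : E) 1 => -u) ⁻¹' A) = -(Subtype.val '' A) := by
    change Subtype.val '' (-A) = _
    rw [← image_neg_eq_neg, ← image_neg_eq_neg, image_image, image_image]
    rfl
  rw [Measure.map_apply hneg hA, hemb.comap_apply, hemb.comap_apply, himage]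
  exact hμ _ (Subtype.coe_image_subset _ A) (hemb.measurableSet_image' hA)

lemma withDensity_hausdorffMeasure_sphere_neg (d : ℝ) {F : E → ℝ≥0∞}
    (hF : ∀ u ∈ sphere (0 : E) 1, F (-u) = F u) {η : Set E} (hη : MeasurableSet η) :
    (μH[d].restrict (sphere (0 : E) 1)).withDensity F (-η) =
      (μH[d].restrict (sphere (0 : E) 1)).withDensity F η := by
  have hneg : Neg.neg ⁻¹' (η ∩ sphere (0 : E) 1) = -η ∩ sphere 0 1 := by
    rw [preimage_inter, neg_preimage, neg_preimage, neg_sphere, neg_zero]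
  have hmp : MeasurePreserving (Neg.neg : E → E) μH[d] μH[d] :=
    (IsometryEquiv.neg E).measurePreserving_hausdorffMeasure d
  rw [withDensity_apply _ hη.neg, withDensity_apply _ hη, Measure.restrict_restrict hη.neg,
    Measure.restrict_restrict hη,
    ← hmp.setLIntegral_comp_preimage_emb (Homeomorph.neg E).measurableEmbedding F
      (η ∩ sphere 0 1), hneg]
  exact setLIntegral_congr_fun (hη.neg.inter isClosed_sphere.measurableSet)
    fun u hu => (hF u hu.2).symm

variable [InnerProductSpace ℝ E] [FiniteDimensional ℝ E]

lemma map_coe_toSphere [Nontrivial E] :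
    (volume : Measure E).toSphere.map Subtype.val =
      μHE[finrank ℝ E - 1].restrict (sphere (0 : E) 1) := by
  have hcone : coneMeasure (fun x : E => ‖x‖) = (volume : Measure E).toSphere.map Subtype.val := by
    simp only [coneMeasure, radialProj, norm_coe_unitSphere, inv_one, one_pow, ENNReal.ofReal_one,
      withDensity_const, one_smul]
  have hsupp : supportMeasure (fun x : E => ‖x‖) id =
      μHE[finrank ℝ E - 1].restrict (sphere (0 : E) 1) := by
    have hS : {x : E | ‖x‖ = 1} = sphere 0 1 := by
      ext x
      exact mem_sphere_zero_iff_norm.symm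
    rw [supportMeasure, hS, withDensity_congr_ae (g := 1), withDensity_one]
    filter_upwards [ae_restrict_mem isClosed_sphere.measurableSet] with x hx
    rw [id_eq, real_inner_self_eq_norm_sq, mem_sphere_zero_iff_norm.1 hx, one_pow,
      ENNReal.ofReal_one, Pi.one_apply]
  have hnormal (x : E) (hx : ‖x‖ = 1) : IsOuterNormal (fun x : E => ‖x‖) x (id x) := by
    refine ⟨hx, fun y => ?_⟩
    rw [id_eq, real_inner_self_eq_norm_sq, hx, one_pow, mul_one]
    exact (real_inner_le_norm y x).trans_eq (by rw [hx, mul_one])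
  rw [← hcone, isStarGauge_norm.coneMeasure_eq_supportMeasure hnormal measurable_id, hsupp]

lemma euclideanHausdorffMeasure_inter_sphere_ne_zero [Nontrivial E] {U : Set E} (hU : IsOpen U)
    (hne : (U ∩ sphere (0 : E) 1).Nonempty) :
    μHE[finrank ℝ E - 1] (U ∩ sphere (0 : E) 1) ≠ 0 := by
  obtain ⟨x, hxU, hxS⟩ := hne
  have hmap := congrArg (fun ρ : Measure E => ρ U) (map_coe_toSphere (E := E))
  rw [Measure.map_apply measurable_subtype_coe hU.measurableSet,
    Measure.restrict_apply hU.measurableSet] at hmap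
  rw [← hmap]
  exact (hU.preimage continuous_subtype_val).measure_ne_zero _ ⟨⟨x, hxS⟩, hxU⟩

theorem exists_gaussDualCurvature_eq_smul_restrict [Nontrivial E] [IsFiniteMeasure μ]
    (hμ : ∀ η ⊆ sphere (0 : E) 1, MeasurableSet η → μ (-η) = μ η)
    (hμ0 : ∀ v ∈ sphere (0 : E) 1, μ {u ∈ sphere (0 : E) 1 | ⟪v, u⟫ ≠ 0} ≠ 0)
    {p q : ℝ} (hp : 0 < p) (hq : 0 < q) :
    ∃ K : Set E, (IsCompact K ∧ Convex ℝ K ∧ (0 : E) ∈ interior K ∧ K = -K) ∧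
      ∃ κ : ℝ≥0∞, κ ≠ 0 ∧ κ ≠ ⊤ ∧ ∀ ν, IsNormalSelection K ν →
        gaussDualCurvature p q K ν = κ • μ.restrict (sphere (0 : E) 1) := by
  have hS : MeasurableSet (sphere (0 : E) 1) := isClosed_sphere.measurableSet
  have hemb : MeasurableEmbedding (Subtype.val : sphere (0 : E) 1 → E) := .subtype_coe hS
  simp only [← map_comap_subtype_coe hS]
  refine exists_gaussDualCurvature_eq_smul (measurePreserving_neg_comap_coe hμ) (fun v => ?_) hp hq
  rw [hemb.comap_apply]
  convert hμ0 v v.2 using 2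
  ext u
  simp [and_comm]

end SphereMeasures

section HausdorffNormalisation

variable {n : ℕ}

lemma hausdorffMeasure_inter_sphere_ne_zero (hn : 0 < n) {U : Set (EuclideanSpace ℝ (Fin n))}
    (hU : IsOpen U) (hne : (U ∩ sphere 0 1).Nonempty) :
    μH[(n : ℝ) - 1] (U ∩ sphere (0 : EuclideanSpace ℝ (Fin n)) 1) ≠ 0 := by
  have : NeZero n := ⟨hn.ne'⟩
  have hE := euclideanHausdorffMeasure_inter_sphere_ne_zero hU hne
  rw [finrank_euclideanSpace_fin] at hE
  rw [← Nat.cast_pred (R := ℝ) hn]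
  contrapose! hE
  rw [Measure.euclideanHausdorffMeasure_def, Measure.smul_apply, hE, smul_zero]

lemma exists_mul_lpGaussDualCurv_eq (hn : 0 < n) : ∃ a : ℝ≥0∞, a ≠ 0 ∧ a ≠ ⊤ ∧
    ∀ (p q : ℝ) (K : Set (EuclideanSpace ℝ (Fin n)))
      {ν : EuclideanSpace ℝ (Fin n) → EuclideanSpace ℝ (Fin n)}
      {η : Set (EuclideanSpace ℝ (Fin n))}, Measurable ν → MeasurableSet η →
      a * lpGaussDualCurv n p q K ν η = gaussDualCurvature p q K ν η := by
  refine ⟨_, ENNReal.coe_ne_zero.2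
    (Measure.addHaarScalarFactor_volume_hausdorffMeasure_ne_zero (n - 1)), ENNReal.coe_ne_top,
    fun p q K ν η hν hη => ?_⟩
  rw [gaussDualCurvature_apply p q hν hη, finrank_euclideanSpace_fin, lpGaussDualCurv,
    ← Nat.cast_pred (R := ℝ) hn, Measure.euclideanHausdorffMeasure_def, Measure.restrict_smul,
    lintegral_smul_measure, ENNReal.smul_def, smul_eq_mul]

theorem exists_lpGaussDualCurv_eq_mul (hn : 0 < n) {μ : Measure (EuclideanSpace ℝ (Fin n))}
    [IsFiniteMeasure μ]
    (hμ : ∀ η ⊆ sphere (0 : EuclideanSpace ℝ (Fin n)) 1, MeasurableSet η → μ (-η) = μ η)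
    (hμ0 : ∀ v ∈ sphere (0 : EuclideanSpace ℝ (Fin n)) 1,
      μ {u ∈ sphere (0 : EuclideanSpace ℝ (Fin n)) 1 | ⟪v, u⟫ ≠ 0} ≠ 0)
    {p q : ℝ} (hp : 0 < p) (hq : 0 < q) :
    ∃ K : Set (EuclideanSpace ℝ (Fin n)),
      (IsCompact K ∧ Convex ℝ K ∧ (0 : EuclideanSpace ℝ (Fin n)) ∈ interior K ∧ K = -K) ∧
      ∃ κ : ℝ≥0∞, κ ≠ 0 ∧ κ ≠ ⊤ ∧ ∀ ν, IsNormalSelection K ν →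
        ∀ η ⊆ sphere (0 : EuclideanSpace ℝ (Fin n)) 1, MeasurableSet η →
          lpGaussDualCurv n p q K ν η = κ * μ η := by
  have : NeZero n := ⟨hn.ne'⟩
  obtain ⟨K, hK, κ, hκ0, hκ, hcurv⟩ := exists_gaussDualCurvature_eq_smul_restrict hμ hμ0 hp hq
  obtain ⟨a, ha0, ha, hnorm⟩ := exists_mul_lpGaussDualCurv_eq hn
  refine ⟨K, hK, a⁻¹ * κ, mul_ne_zero (ENNReal.inv_ne_zero.2 ha) hκ0,
    ENNReal.mul_ne_top (ENNReal.inv_ne_top.2 ha0) hκ, fun ν hν η hηS hη => ?_⟩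
  have hmul : a * lpGaussDualCurv n p q K ν η = κ * μ η := by
    rw [hnorm p q K hν.measurable hη, hcurv ν hν, Measure.smul_apply, smul_eq_mul,
      Measure.restrict_apply hη, inter_eq_left.2 hηS]
  rw [mul_assoc, ← hmul, ENNReal.inv_mul_cancel_left ha0 ha]

lemma withDensity_hausdorffMeasure_sphere_inner_ne_zero (hn : 0 < n)
    {F : EuclideanSpace ℝ (Fin n) → ℝ≥0∞} {c : ℝ≥0∞} (hc : c ≠ 0)
    (hF : ∀ u ∈ sphere (0 : EuclideanSpace ℝ (Fin n)) 1, c ≤ F u) {v : EuclideanSpace ℝ (Fin n)}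
    (hv : v ∈ sphere (0 : EuclideanSpace ℝ (Fin n)) 1) :
    (μH[(n : ℝ) - 1].restrict (sphere (0 : EuclideanSpace ℝ (Fin n)) 1)).withDensity F
      {u ∈ sphere (0 : EuclideanSpace ℝ (Fin n)) 1 | ⟪v, u⟫ ≠ 0} ≠ 0 := by
  have hopen : IsOpen {u : EuclideanSpace ℝ (Fin n) | ⟪v, u⟫ ≠ 0} :=
    isOpen_ne_fun (by fun_prop) continuous_const
  have hvv : ⟪v, v⟫ ≠ 0 := by
    rw [real_inner_self_eq_norm_sq, mem_sphere_zero_iff_norm.1 hv, one_pow]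
    exact one_ne_zero
  have hinter : {u ∈ sphere (0 : EuclideanSpace ℝ (Fin n)) 1 | ⟪v, u⟫ ≠ 0} =
      {u | ⟪v, u⟫ ≠ 0} ∩ sphere 0 1 := inter_comm _ _
  have hmeas := hopen.measurableSet.inter
    (isClosed_sphere (x := (0 : EuclideanSpace ℝ (Fin n))) (ε := 1)).measurableSet
  rw [hinter]
  refine withDensity_apply_ne_zero_of_le hmeas ?_ hc fun u hu => hF u hu.2
  rw [Measure.restrict_apply hmeas, inter_assoc, inter_self]
  exact hausdorffMeasure_inter_sphere_ne_zero hn hopen ⟨v, hvv, hv⟩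

end HausdorffNormalisation

end LpGaussDual

theorem even_lp_gauss_dual_minkowski_general (n : ℕ) (hn : 0 < n) (p q : ℝ) (hp : 0 < p)
    (hq : 0 < q) (μ : Measure (EuclideanSpace ℝ (Fin n))) (hμfin : IsFiniteMeasure μ)
    (hμeven : ∀ η ⊆ sphere (0 : EuclideanSpace ℝ (Fin n)) 1, MeasurableSet η → μ (-η) = μ η)
    (hμnc : ∀ v ∈ sphere (0 : EuclideanSpace ℝ (Fin n)) 1,
      μ {u ∈ sphere (0 : EuclideanSpace ℝ (Fin n)) 1 | ⟪v, u⟫ ≠ 0} ≠ 0) :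
    ∃ K : Set (EuclideanSpace ℝ (Fin n)),
      (IsCompact K ∧ Convex ℝ K ∧ (0 : EuclideanSpace ℝ (Fin n)) ∈ interior K ∧ K = -K) ∧
      ∀ ν : EuclideanSpace ℝ (Fin n) → EuclideanSpace ℝ (Fin n),
        Measurable ν →
        (∀ x, ν x ∈ sphere (0 : EuclideanSpace ℝ (Fin n)) 1) →
        (∀ x ∈ frontier K, ∀ y ∈ K, ⟪y, ν x⟫ ≤ ⟪x, ν x⟫) →
          (0 < lpGaussDualCurv n p q K ν (sphere (0 : EuclideanSpace ℝ (Fin n)) 1) ∧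
            lpGaussDualCurv n p q K ν (sphere (0 : EuclideanSpace ℝ (Fin n)) 1) < ⊤) ∧
          ∀ η : Set (EuclideanSpace ℝ (Fin n)),
            η ⊆ sphere (0 : EuclideanSpace ℝ (Fin n)) 1 → MeasurableSet η →
              μ η * lpGaussDualCurv n p q K ν (sphere (0 : EuclideanSpace ℝ (Fin n)) 1) =
                μ (sphere (0 : EuclideanSpace ℝ (Fin n)) 1) * lpGaussDualCurv n p q K ν η := by
  obtain ⟨K, hK, κ, hκ0, hκ, hcurv⟩ :=
    LpGaussDual.exists_lpGaussDualCurv_eq_mul hn hμeven hμnc hp hq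
  refine ⟨K, hK, fun ν hνm hνS hνn => ?_⟩
  have : NeZero n := ⟨hn.ne'⟩
  obtain ⟨v, hv⟩ : (sphere (0 : EuclideanSpace ℝ (Fin n)) 1).Nonempty :=
    NormedSpace.sphere_nonempty.2 zero_le_one
  have hμS : μ (sphere 0 1) ≠ 0 := fun h0 => hμnc v hv (measure_mono_null (sep_subset _ _) h0)
  have hcurvη := hcurv ν ⟨hνm, hνS, hνn⟩
  have hcurvS := hcurvη _ subset_rfl isClosed_sphere.measurableSet
  refine ⟨⟨?_, ?_⟩, fun η hηS hη => ?_⟩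
  · exact hcurvS ▸ pos_iff_ne_zero.2 (mul_ne_zero hκ0 hμS)
  · exact hcurvS ▸ ENNReal.mul_lt_top hκ.lt_top (measure_lt_top μ _)
  · rw [hcurvS, hcurvη η hηS hη]
    ring

theorem even_lp_gauss_dual_minkowski (n : ℕ) (hn : 2 ≤ n) (p q : ℝ) (hp : 1 < p) (hq : 1 < q)
    (μ : Measure (EuclideanSpace ℝ (Fin n))) (hμfin : IsFiniteMeasure μ) (hμne : μ ≠ 0)
    (f : EuclideanSpace ℝ (Fin n) → ℝ) (M₀ : ℝ) (hM₀ : 0 < M₀)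
    (hμ : μ = (μH[(n : ℝ) - 1].restrict
      (sphere (0 : EuclideanSpace ℝ (Fin n)) 1)).withDensity (fun u => ENNReal.ofReal (f u)))
    (hfeven : ∀ u ∈ sphere (0 : EuclideanSpace ℝ (Fin n)) 1, f (-u) = f u)
    (hfbound : ∀ u ∈ sphere (0 : EuclideanSpace ℝ (Fin n)) 1, 1 / M₀ ≤ f u ∧ f u ≤ M₀) :
    ∃ K : Set (EuclideanSpace ℝ (Fin n)),
      (IsCompact K ∧ Convex ℝ K ∧ (0 : EuclideanSpace ℝ (Fin n)) ∈ interior K ∧ K = -K) ∧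
      ∀ ν : EuclideanSpace ℝ (Fin n) → EuclideanSpace ℝ (Fin n),
        Measurable ν →
        (∀ x, ν x ∈ sphere (0 : EuclideanSpace ℝ (Fin n)) 1) →
        (∀ x ∈ frontier K, ∀ y ∈ K, ⟪y, ν x⟫ ≤ ⟪x, ν x⟫) →
          (0 < lpGaussDualCurv n p q K ν (sphere (0 : EuclideanSpace ℝ (Fin n)) 1) ∧
            lpGaussDualCurv n p q K ν (sphere (0 : EuclideanSpace ℝ (Fin n)) 1) < ⊤) ∧
          ∀ η : Set (EuclideanSpace ℝ (Fin n)),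
            η ⊆ sphere (0 : EuclideanSpace ℝ (Fin n)) 1 → MeasurableSet η →
              μ η * lpGaussDualCurv n p q K ν (sphere (0 : EuclideanSpace ℝ (Fin n)) 1) =
                μ (sphere (0 : EuclideanSpace ℝ (Fin n)) 1) * lpGaussDualCurv n p q K ν η := by
  subst hμ
  exact even_lp_gauss_dual_minkowski_general n (two_pos.trans_le hn) p q (one_pos.trans hp)
    (one_pos.trans hq) _ hμfin
    (fun η _ hη => LpGaussDual.withDensity_hausdorffMeasure_sphere_neg _
      (fun u hu => by rw [hfeven u hu]) hη)
    (fun v hv => LpGaussDual.withDensity_hausdorffMeasure_sphere_inner_ne_zero (two_pos.trans_le hn)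
      (ENNReal.ofReal_pos.2 (one_div_pos.2 hM₀)).ne'
      (fun u hu => ENNReal.ofReal_le_ofReal (hfbound u hu).1) hv)
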